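/- arXiv:1408.1587 — 5 statements merged into one kernel-verified Lean document; each statement's English description precedes it below -/
import Mathlib

section
/- Let Ω ⊂ ℝ² be a bounded domain, let M ⊂ Ω be an open set that is dense in Ω with |M| < |Ω|/2, and set f := 2·χ_M. Then there exists no map φ : cl(Ω) → cl(Ω) of class C¹ with φ = id on ∂Ω and det ∇φ ≥ f almost everywhere in Ω (in particular, the bi-Lipschitz regularity in the L^∞ existence theorem for the prescribed Jacobian inequality is sharp in general). -/
open MeasureTheory Set
open scoped ENNReal NNReal

/-!
Write `φ = id + w` on `Ω` and extend `w` by zero. Since `det ∇φ` is continuous on `Ω` and `M` is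
open and dense in `Ω`, the inequality `det ∇φ ≥ 2` holds at every point of `Ω`, so that
`∫_Ω (det ∇φ - 1) ≥ |Ω| > 0`. The contradiction comes from `∫_Ω (det ∇φ - 1) = 0`.

No regularity of `∂Ω` is available (it may even have positive measure), so this identity is
obtained on the whole plane. The extended `w` is Lipschitz (`lipschitzWith_of_zero_off`): its
derivative is bounded on `Ω` because `φ` is `C¹` up to the boundary, and a segment that leaves `Ω`
passes through a zero of `w`. By Rademacher's theorem `w` is differentiable almost everywhere, and
its derivative vanishes at almost every point of `Ωᶜ`, where `w = 0`.

It remains to see that `∫ (det (id + ∇w) - 1) = 0` for `w` Lipschitz with compact support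
(`integral_jacExcess_fderiv`). When derivatives are replaced by centered difference quotients the
identity is exact (`integral_jacExcess_diff`), because translations preserve Lebesgue measure and
centered differences in two directions commute and are antisymmetric; dominated convergence then
gives the claim.
-/

/-! ### The excess of the Jacobian determinant -/

/-- `det (id + A) - 1` for the endomorphism `A` of the plane with columns `p = A (1, 0)` and
`q = A (0, 1)`. -/
def jacExcess (p q : ℝ × ℝ) : ℝ := p.1 + q.2 + p.1 * q.2 - q.1 * p.2

lemma continuous_jacExcess : Continuous fun z : (ℝ × ℝ) × (ℝ × ℝ) => jacExcess z.1 z.2 := by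
  unfold jacExcess
  fun_prop

lemma det_id_add_sub_one (A : ℝ × ℝ →L[ℝ] ℝ × ℝ) :
    (ContinuousLinearMap.id ℝ (ℝ × ℝ) + A).det - 1 = jacExcess (A (1, 0)) (A (0, 1)) := by
  rw [ContinuousLinearMap.det, ← LinearMap.det_toMatrix (Module.Basis.finTwoProd ℝ),
    Matrix.det_fin_two]
  simp [LinearMap.toMatrix_apply, jacExcess]
  ring

lemma abs_jacExcess_le {p q : ℝ × ℝ} {C : ℝ} (hp : ‖p‖ ≤ C) (hq : ‖q‖ ≤ C) :
    ‖jacExcess p q‖ ≤ C + C + C * C + C * C := by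
  have hC : 0 ≤ C := (norm_nonneg p).trans hp
  have h1 : ‖p.1‖ ≤ C := (norm_fst_le p).trans hp
  have h2 : ‖p.2‖ ≤ C := (norm_snd_le p).trans hp
  have h3 : ‖q.1‖ ≤ C := (norm_fst_le q).trans hq
  have h4 : ‖q.2‖ ≤ C := (norm_snd_le q).trans hq
  have h5 : ‖p.1 * q.2‖ ≤ C * C := by rw [norm_mul]; gcongr
  have h6 : ‖q.1 * p.2‖ ≤ C * C := by rw [norm_mul]; gcongr
  unfold jacExcess
  refine (norm_sub_le _ _).trans (add_le_add ((norm_add_le _ _).trans (add_le_add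
    ((norm_add_le _ _).trans (add_le_add h1 h4)) h5)) h6)

/-! ### Centered differences -/

/-- The integral of a product of centered differences, in terms of the correlations
`∫ u x * v (x + c)`. The right-hand side is symmetric in `a` and `b`, which makes the cross terms
of the discrete Jacobian cancel. -/
lemma integral_diff_mul_diff {u v : ℝ × ℝ → ℝ} (hu : Continuous u) (hv : Continuous v)
    (hus : HasCompactSupport u) (a b : ℝ × ℝ) :
    Integrable (fun x => (u (x + a) - u (x - a)) * (v (x + b) - v (x - b))) ∧
    ∫ x, (u (x + a) - u (x - a)) * (v (x + b) - v (x - b)) =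
      (∫ x, u x * v (x + (b - a))) - (∫ x, u x * v (x + (-b - a)))
        - (∫ x, u x * v (x + (b + a))) + ∫ x, u x * v (x + (a - b)) := by
  have hint : ∀ c, Integrable (fun x => u x * v (x + c)) := fun c =>
    (by fun_prop : Continuous fun x => u x * v (x + c)).integrable_of_hasCompactSupport
      hus.mul_right
  have hint2 : ∀ p q : ℝ × ℝ, Integrable (fun x => u (x + p) * v (x + q)) := fun p q => by
    have := (hint (q - p)).comp_add_right p
    refine this.congr (Filter.Eventually.of_forall fun x => ?_)
    simp
  have hval : ∀ p q : ℝ × ℝ, ∫ x, u (x + p) * v (x + q) = ∫ x, u x * v (x + (q - p)) :=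
    fun p q => by
      rw [← integral_add_right_eq_self (fun x => u x * v (x + (q - p))) p]
      simp
  have hexp : (fun x => (u (x + a) - u (x - a)) * (v (x + b) - v (x - b))) = fun x =>
      (u (x + a) * v (x + b) - u (x + a) * v (x + -b) - u (x + -a) * v (x + b))
        + u (x + -a) * v (x + -b) := by
    funext x
    simp only [sub_eq_add_neg]
    ring
  rw [hexp]
  have i1 : Integrable (fun x => u (x + a) * v (x + b) - u (x + a) * v (x + -b)) :=
    (hint2 a b).sub (hint2 a (-b))
  have i2 : Integrable (fun x =>
      u (x + a) * v (x + b) - u (x + a) * v (x + -b) - u (x + -a) * v (x + b)) :=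
    i1.sub (hint2 (-a) b)
  refine ⟨i2.fun_add (hint2 (-a) (-b)), ?_⟩
  rw [integral_add i2 (hint2 _ _), integral_sub i1 (hint2 _ _),
    integral_sub (hint2 _ _) (hint2 _ _), hval, hval, hval, hval]
  simp only [sub_neg_eq_add, neg_add_eq_sub]

lemma integral_diff_eq_zero {u : ℝ × ℝ → ℝ} (hu : Continuous u) (hus : HasCompactSupport u)
    (a : ℝ × ℝ) : Integrable (fun x => u (x + a) - u (x - a)) ∧
      ∫ x, (u (x + a) - u (x - a)) = 0 := by
  have h := hu.integrable_of_hasCompactSupport (μ := volume) hus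
  have h1 := h.comp_add_right a
  have h2 := h.comp_sub_right a
  refine ⟨h1.sub h2, ?_⟩
  rw [integral_sub h1 h2, integral_add_right_eq_self u a, integral_sub_right_eq_self u a, sub_self]

/-- Discrete form of `∫ (det (id + ∇w) - 1) = 0`; it is exact for every step. -/
lemma integral_jacExcess_diff {w : ℝ × ℝ → ℝ × ℝ} (hw : Continuous w)
    (hws : HasCompactSupport w) (a b : ℝ × ℝ) (c : ℝ) :
    ∫ x, jacExcess (c • (w (x + a) - w (x - a))) (c • (w (x + b) - w (x - b))) = 0 := by
  have hu : Continuous fun x => (w x).1 := by fun_prop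
  have hv : Continuous fun x => (w x).2 := by fun_prop
  have hus : HasCompactSupport fun x => (w x).1 := hws.comp_left (g := Prod.fst) rfl
  have hvs : HasCompactSupport fun x => (w x).2 := hws.comp_left (g := Prod.snd) rfl
  obtain ⟨i1, e1⟩ := integral_diff_eq_zero hu hus a
  obtain ⟨i2, e2⟩ := integral_diff_eq_zero hv hvs b
  obtain ⟨i3, e3⟩ := integral_diff_mul_diff hu hv hus a b
  obtain ⟨i4, e4⟩ := integral_diff_mul_diff hu hv hus b a
  have hexp : (fun x => jacExcess (c • (w (x + a) - w (x - a))) (c • (w (x + b) - w (x - b)))) =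
      fun x => (c * ((w (x + a)).1 - (w (x - a)).1) + c * ((w (x + b)).2 - (w (x - b)).2)
        + (c * c) * (((w (x + a)).1 - (w (x - a)).1) * ((w (x + b)).2 - (w (x - b)).2)))
        - (c * c) * (((w (x + b)).1 - (w (x - b)).1) * ((w (x + a)).2 - (w (x - a)).2)) := by
    funext x
    simp only [jacExcess, Prod.smul_fst, Prod.smul_snd, Prod.fst_sub, Prod.snd_sub, smul_eq_mul]
    ring
  have j1 := i1.const_mul c
  have j2 := i2.const_mul c
  have j3 := i3.const_mul (c * c)
  have j4 := i4.const_mul (c * c)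
  rw [hexp, integral_sub ((j1.fun_add j2).fun_add j3) j4, integral_add (j1.fun_add j2) j3,
    integral_add j1 j2, integral_const_mul, integral_const_mul, integral_const_mul,
    integral_const_mul, e1, e2, e3, e4]
  have h1 : -b - a = -a - b := by abel
  have h2 : b + a = a + b := by abel
  rw [h1, h2]
  ring

/-! ### Passage to the limit -/

/-- Centered difference quotients converge to the directional derivative. -/
lemma tendsto_centered_diff {w : ℝ × ℝ → ℝ × ℝ} {x : ℝ × ℝ} (hw : DifferentiableAt ℝ w x)
    (e : ℝ × ℝ) {h : ℕ → ℝ} (hpos : ∀ n, 0 < h n)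
    (hlim : Filter.Tendsto h Filter.atTop (nhds 0)) :
    Filter.Tendsto (fun n => (2 * h n)⁻¹ • (w (x + h n • e) - w (x - h n • e)))
      Filter.atTop (nhds (fderiv ℝ w x e)) := by
  have hne : ∀ n, h n ≠ 0 := fun n => (hpos n).ne'
  have hin : Filter.Tendsto h Filter.atTop (nhdsWithin 0 {0}ᶜ) :=
    tendsto_nhdsWithin_iff.2 ⟨hlim, Filter.Eventually.of_forall hne⟩
  have key : ∀ e', Filter.Tendsto (fun n => (h n)⁻¹ • (w (x + h n • e') - w x))
      Filter.atTop (nhds (fderiv ℝ w x e')) := fun e' =>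
    (hw.hasFDerivAt.hasLineDerivAt e').tendsto_slope_zero.comp hin
  have := ((key e).sub (key (-e))).const_smul (2⁻¹ : ℝ)
  have hl : (2⁻¹ : ℝ) • (fderiv ℝ w x e - fderiv ℝ w x (-e)) = fderiv ℝ w x e := by
    rw [map_neg, sub_neg_eq_add, ← two_smul ℝ, smul_smul]
    norm_num
  rw [hl] at this
  refine this.congr fun n => ?_
  rw [← smul_sub, smul_smul, mul_inv, smul_neg, ← sub_eq_add_neg, sub_sub_sub_cancel_right]

/-- The integral of `det (id + ∇w) - 1` vanishes for a Lipschitz map `w` of bounded support. -/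
lemma integral_jacExcess_fderiv {w : ℝ × ℝ → ℝ × ℝ} {C : ℝ≥0} (hw : LipschitzWith C w)
    {R : ℝ} (hR : ∀ x, R < ‖x‖ → w x = 0) :
    Integrable (fun x => jacExcess (fderiv ℝ w x (1, 0)) (fderiv ℝ w x (0, 1))) ∧
    ∫ x, jacExcess (fderiv ℝ w x (1, 0)) (fderiv ℝ w x (0, 1)) = 0 := by
  have hcs : HasCompactSupport w :=
    HasCompactSupport.intro (isCompact_closedBall (0 : ℝ × ℝ) R) fun x hx => hR x (by simpa using hx)
  set h : ℕ → ℝ := fun n => 1 / ((n : ℝ) + 1) with hh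
  have hpos : ∀ n, 0 < h n := fun n => by positivity
  have hle : ∀ n, h n ≤ 1 := fun n => by
    rw [hh]
    refine (div_le_one (by positivity)).2 ?_
    have : (0 : ℝ) ≤ n := n.cast_nonneg
    linarith
  have hlim : Filter.Tendsto h Filter.atTop (nhds 0) := tendsto_one_div_add_atTop_nhds_zero_nat
  set D : ℕ → ℝ × ℝ → ℝ × ℝ → ℝ × ℝ := fun n e x =>
    (2 * h n)⁻¹ • (w (x + h n • e) - w (x - h n • e)) with hD
  have hn1 : ‖((1, 0) : ℝ × ℝ)‖ = 1 := by simp [Prod.norm_def]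
  have hn2 : ‖((0, 1) : ℝ × ℝ)‖ = 1 := by simp [Prod.norm_def]
  have hDb : ∀ n e x, ‖e‖ = 1 → ‖D n e x‖ ≤ C := fun n e x he => by
    have h1 := hw.norm_sub_le (x + h n • e) (x - h n • e)
    have h2 : x + h n • e - (x - h n • e) = (2 * h n) • e := by
      rw [mul_smul, two_smul]; abel
    have hp : 0 < 2 * h n := by linarith [hpos n]
    rw [h2, norm_smul, he, mul_one, Real.norm_of_nonneg hp.le] at h1
    rw [hD]
    simp only
    rw [norm_smul, norm_inv, Real.norm_of_nonneg hp.le, inv_mul_le_iff₀ hp]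
    linarith
  have hD0 : ∀ n e x, ‖e‖ = 1 → R + 1 < ‖x‖ → D n e x = 0 := fun n e x he hx => by
    have hs : ‖h n • e‖ ≤ 1 := by
      rw [norm_smul, he, mul_one, Real.norm_of_nonneg (hpos n).le]; exact hle n
    have h1 : w (x + h n • e) = 0 := hR _ (by
      have := norm_sub_le (x + h n • e) (h n • e)
      rw [add_sub_cancel_right] at this
      linarith)
    have h2 : w (x - h n • e) = 0 := hR _ (by
      have := norm_add_le (x - h n • e) (h n • e)
      rw [sub_add_cancel] at this
      linarith)
    simp [hD, h1, h2]
  have hDc : ∀ n e, Continuous (D n e) := fun n e => by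
    have := hw.continuous
    rw [hD]
    fun_prop
  set K : ℝ := C + C + C * C + C * C with hK
  set B : Set (ℝ × ℝ) := Metric.closedBall 0 (R + 1) with hB
  have hbound_int : Integrable (B.indicator fun _ => K) :=
    (integrable_indicator_iff Metric.isClosed_closedBall.measurableSet).2
      (integrableOn_const (isCompact_closedBall _ _).measure_lt_top.ne)
  have hae : ∀ᵐ x : ℝ × ℝ, Filter.Tendsto (fun n => jacExcess (D n (1, 0) x) (D n (0, 1) x))
      Filter.atTop (nhds (jacExcess (fderiv ℝ w x (1, 0)) (fderiv ℝ w x (0, 1)))) := by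
    filter_upwards [hw.ae_differentiableAt (μ := volume)] with x hx
    exact (continuous_jacExcess.tendsto _).comp
      ((tendsto_centered_diff hx (1, 0) hpos hlim).prodMk_nhds
        (tendsto_centered_diff hx (0, 1) hpos hlim))
  have hmeas : ∀ n, AEStronglyMeasurable (fun x => jacExcess (D n (1, 0) x) (D n (0, 1) x))
      (volume : Measure (ℝ × ℝ)) := fun n =>
    (continuous_jacExcess.comp ((hDc n (1, 0)).prodMk (hDc n (0, 1)))).aestronglyMeasurable
  have hbd : ∀ n x, ‖jacExcess (D n (1, 0) x) (D n (0, 1) x)‖ ≤ B.indicator (fun _ => K) x := by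
    intro n x
    by_cases hx : x ∈ B
    · rw [indicator_of_mem hx]
      exact abs_jacExcess_le (hDb n _ x hn1) (hDb n _ x hn2)
    · have hx' : R + 1 < ‖x‖ := by simpa [hB] using hx
      rw [indicator_of_notMem hx, hD0 n _ x hn1 hx', hD0 n _ x hn2 hx']
      simp [jacExcess]
  have hlimit := tendsto_integral_of_dominated_convergence (B.indicator fun _ => K) hmeas
    hbound_int (fun n => Filter.Eventually.of_forall (hbd n)) hae
  constructor
  · refine hbound_int.mono' (aestronglyMeasurable_of_tendsto_ae _ hmeas hae) ?_
    filter_upwards [hae] with x hx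
    exact le_of_tendsto hx.norm (Filter.Eventually.of_forall fun n => hbd n x)
  · refine tendsto_nhds_unique hlimit ?_
    have : ∀ n, ∫ x, jacExcess (D n (1, 0) x) (D n (0, 1) x) = 0 := fun n =>
      integral_jacExcess_diff hw.continuous hcs _ _ _
    simp only [this]
    exact tendsto_const_nhds

/-! ### Lipschitz extension by zero -/

/-- A continuous map that vanishes off an open set and has derivative bounded by `C` on it is
`C`-Lipschitz on the whole plane, whatever the shape of the open set. -/
lemma lipschitzWith_of_zero_off {w : ℝ × ℝ → ℝ × ℝ} {Ω : Set (ℝ × ℝ)} {C : ℝ≥0}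
    (hΩ : IsOpen Ω) (hw : Continuous w) (h0 : ∀ x ∉ Ω, w x = 0)
    (hd : ∀ x ∈ Ω, DifferentiableAt ℝ w x) (hb : ∀ x ∈ Ω, ‖fderiv ℝ w x‖₊ ≤ C) :
    LipschitzWith C w := by
  -- The largest ball about `a` inside `Ω` touches `Ωᶜ`, and `w` is `C`-Lipschitz on its closure.
  have key : ∀ a p, p ∉ Ω → ‖w a‖ ≤ C * dist a p := by
    intro a p hp
    by_cases ha : a ∈ Ω
    · have hne : (Ωᶜ).Nonempty := ⟨p, hp⟩
      obtain ⟨y, hy, hdy⟩ := hΩ.isClosed_compl.exists_infDist_eq_dist hne a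
      have hr : 0 < Metric.infDist a Ωᶜ :=
        (hΩ.isClosed_compl.notMem_iff_infDist_pos hne).1 (by simpa using ha)
      have hsub : Metric.ball a (Metric.infDist a Ωᶜ) ⊆ Ω := Metric.ball_infDist_compl_subset
      have hlip : LipschitzOnWith C w (Metric.ball a (Metric.infDist a Ωᶜ)) :=
        (convex_ball _ _).lipschitzOnWith_of_nnnorm_fderiv_le (fun x hx => hd x (hsub hx))
          (fun x hx => hb x (hsub hx))
      have hlip' := LipschitzOnWith.closure hw.continuousOn hlip
      rw [closure_ball _ hr.ne'] at hlip'
      have h1 := hlip'.dist_le_mul a (Metric.mem_closedBall_self hr.le) y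
        (by rw [Metric.mem_closedBall, dist_comm, hdy])
      rw [h0 y hy, dist_zero_right, ← hdy] at h1
      exact h1.trans (mul_le_mul_of_nonneg_left (Metric.infDist_le_dist_of_mem hp) C.2)
    · rw [h0 a ha, norm_zero]
      positivity
  refine LipschitzWith.of_dist_le_mul fun a b => ?_
  by_cases hseg : segment ℝ a b ⊆ Ω
  · exact ((convex_segment a b).lipschitzOnWith_of_nnnorm_fderiv_le (fun x hx => hd x (hseg hx))
      (fun x hx => hb x (hseg hx))).dist_le_mul a (left_mem_segment ℝ a b) b
        (right_mem_segment ℝ a b)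
  · obtain ⟨p, hp, hpΩ⟩ := not_subset.1 hseg
    calc dist (w a) (w b) ≤ ‖w a‖ + ‖w b‖ := dist_le_norm_add_norm _ _
      _ ≤ C * dist a p + C * dist b p := add_le_add (key a p hpΩ) (key b p hpΩ)
      _ = C * (dist a p + dist p b) := by rw [dist_comm b p]; ring
      _ = C * dist a b := by rw [dist_add_dist_of_mem_segment hp]

/-- A map of class `C¹` up to the boundary of a bounded open set has bounded derivative inside. -/
lemma exists_fderiv_bound {φ : ℝ × ℝ → ℝ × ℝ} {Ω : Set (ℝ × ℝ)} (hΩ : IsOpen Ω)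
    (hbdd : Bornology.IsBounded Ω) (hφ : ContDiffOn ℝ 1 φ (closure Ω)) :
    ∃ C : ℝ, ∀ x ∈ Ω, ‖fderiv ℝ φ x‖ ≤ C := by
  have hloc : ∀ x ∈ closure Ω, ∃ t ∈ nhdsWithin x (closure Ω), ∃ C : ℝ,
      ∀ y ∈ t ∩ Ω, ‖fderiv ℝ φ y‖ ≤ C := by
    intro x hx
    have h1 : ContDiffWithinAt ℝ (0 + 1) φ (closure Ω) x := by simpa using hφ x hx
    obtain ⟨u, hu, -, -, f', hf', hc⟩ :=
      (contDiffWithinAt_succ_iff_hasFDerivWithinAt' (by simp)).1 h1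
    rw [insert_eq_of_mem hx] at hu
    have hev : ∀ᶠ y in nhdsWithin x (closure Ω), ‖f' y‖ < ‖f' x‖ + 1 :=
      hc.continuousWithinAt.norm.eventually (gt_mem_nhds (lt_add_one _))
    refine ⟨_, Filter.inter_mem hu hev, ‖f' x‖ + 1, fun y hy => ?_⟩
    have hfd : HasFDerivAt φ (f' y) y :=
      (hf' y hy.1.1).hasFDerivAt (Filter.mem_of_superset (hΩ.mem_nhds hy.2) subset_closure)
    rw [hfd.fderiv]
    exact le_of_lt hy.1.2
  obtain ⟨C, hC⟩ := hbdd.isCompact_closure.induction_on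
    (p := fun t => ∃ C : ℝ, ∀ y ∈ t ∩ Ω, ‖fderiv ℝ φ y‖ ≤ C)
    ⟨0, by simp⟩
    (fun s t hst ⟨C, hC⟩ => ⟨C, fun y hy => hC y ⟨hst hy.1, hy.2⟩⟩)
    (fun s t ⟨C, hC⟩ ⟨C', hC'⟩ => ⟨max C C', fun y hy => hy.1.elim
      (fun h => (hC y ⟨h, hy.2⟩).trans (le_max_left _ _))
      (fun h => (hC' y ⟨h, hy.2⟩).trans (le_max_right _ _))⟩)
    hloc
  exact ⟨C, fun x hx => hC x ⟨subset_closure hx, hx⟩⟩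

/-- The derivative of a Lipschitz map vanishes at almost every zero of the map. -/
lemma ae_fderiv_eq_zero {w : ℝ × ℝ → ℝ × ℝ} {C : ℝ≥0} (hw : LipschitzWith C w)
    {s : Set (ℝ × ℝ)} (hs : MeasurableSet s) (h0 : ∀ x ∈ s, w x = 0) :
    ∀ᵐ x : ℝ × ℝ, x ∈ s → fderiv ℝ w x = 0 := by
  have hm : MeasurableSet {x | DifferentiableAt ℝ w x} := measurableSet_of_differentiableAt ℝ w
  have happ : ApproximatesLinearOn w (0 : ℝ × ℝ →L[ℝ] ℝ × ℝ)
      (s ∩ {x | DifferentiableAt ℝ w x}) 0 := by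
    intro x hx y hy
    simp [h0 x hx.1, h0 y hy.1]
  have := happ.norm_fderiv_sub_le volume (hs.inter hm) (fderiv ℝ w)
    (fun x hx => hx.2.hasFDerivAt.hasFDerivWithinAt)
  rw [ae_restrict_iff' (hs.inter hm)] at this
  filter_upwards [this, hw.ae_differentiableAt (μ := volume)] with x hx hdx hxs
  simpa using hx ⟨hxs, hdx⟩

/-! ### Nonexistence -/

/-- **Sharpness of bi-Lipschitz regularity.** Let `Ω ⊆ ℝ²` be a bounded domain, `M ⊆ Ω` open
and dense in `Ω` with `|M| < |Ω|/2`, and `f := 2·χ_M`. Then there is no `C¹` map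
`φ : cl Ω → cl Ω` with `φ = id` on `∂Ω` and `det ∇φ ≥ f` a.e. in `Ω`. -/
theorem no_C1_solution_of_prescribed_jacobian_inequality
    (Ω : Set (ℝ × ℝ)) (hopen : IsOpen Ω) (hconn : IsConnected Ω)
    (hbdd : Bornology.IsBounded Ω)
    (M : Set (ℝ × ℝ)) (hM : IsOpen M) (hMΩ : M ⊆ Ω) (hdense : Ω ⊆ closure M)
    (hmeas : volume M < volume Ω / 2) :
    ¬ ∃ φ : ℝ × ℝ → ℝ × ℝ,
        ContDiffOn ℝ 1 φ (closure Ω) ∧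
        Set.MapsTo φ (closure Ω) (closure Ω) ∧
        (∀ x ∈ frontier Ω, φ x = x) ∧
        ∀ᵐ x ∂(volume.restrict Ω),
          Set.indicator M (fun _ => (2 : ℝ)) x ≤ (fderiv ℝ φ x).det := by
  rintro ⟨φ, hφ, -, hid, hdet⟩
  have hφΩ : ContDiffOn ℝ 1 φ Ω := hφ.mono subset_closure
  have hφd : ∀ x ∈ Ω, DifferentiableAt ℝ φ x := fun x hx =>
    (hφΩ.contDiffAt (hopen.mem_nhds hx)).differentiableAt one_ne_zero
  have hdetc : ContinuousOn (fun x => (fderiv ℝ φ x).det) Ω :=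
    ContinuousLinearMap.continuous_det.comp_continuousOn
      (hφΩ.continuousOn_fderiv_of_isOpen hopen le_rfl)
  -- The open set `{det < 2} ∩ M` is null, hence empty; by density so is `{det < 2} ∩ Ω`.
  have hdet2 : ∀ x ∈ Ω, 2 ≤ (fderiv ℝ φ x).det := by
    intro x hx
    by_contra! hlt
    set U := Ω ∩ (fun x => (fderiv ℝ φ x).det) ⁻¹' Iio 2 with hU
    have hUo : IsOpen U := hdetc.isOpen_inter_preimage hopen isOpen_Iio
    have hne : (U ∩ M).Nonempty := mem_closure_iff.1 (hdense hx) U hUo ⟨hx, hlt⟩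
    refine (hUo.inter hM).measure_ne_zero volume hne ?_
    rw [ae_restrict_iff' hopen.measurableSet] at hdet
    refine measure_mono_null (fun y hy => ?_) (ae_iff.1 hdet)
    have hyM := hy.2
    have hylt : (fderiv ℝ φ y).det < 2 := hy.1.2
    simp only [mem_ofPred_eq, Classical.not_imp, not_le, indicator_of_mem hyM]
    exact ⟨hy.1.1, hylt⟩
  set w : ℝ × ℝ → ℝ × ℝ := Ω.indicator fun x => φ x - x with hw
  have hw0 : ∀ x ∉ Ω, w x = 0 := fun x hx => indicator_of_notMem hx _
  have hwfd : ∀ x ∈ Ω, HasFDerivAt w (fderiv ℝ φ x - ContinuousLinearMap.id ℝ (ℝ × ℝ)) x := by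
    intro x hx
    refine ((hφd x hx).hasFDerivAt.sub (hasFDerivAt_id x)).congr_of_eventuallyEq ?_
    filter_upwards [hopen.mem_nhds hx] with y hy
    simp [hw, indicator_of_mem hy]
  have hwc : Continuous w := by
    refine continuous_indicator (fun x hx => ?_) (hφ.continuousOn.sub continuousOn_id)
    rw [hid x hx, sub_self]
  obtain ⟨C, hC⟩ := exists_fderiv_bound hopen hbdd hφ
  have hlip : LipschitzWith (C + ‖ContinuousLinearMap.id ℝ (ℝ × ℝ)‖).toNNReal w := by
    refine lipschitzWith_of_zero_off hopen hwc hw0 (fun x hx => (hwfd x hx).differentiableAt) ?_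
    intro x hx
    rw [(hwfd x hx).fderiv, ← NNReal.coe_le_coe, coe_nnnorm]
    exact ((norm_sub_le _ _).trans (by gcongr; exact hC x hx)).trans (Real.le_coe_toNNReal _)
  obtain ⟨R, hR⟩ := hbdd.exists_norm_le
  obtain ⟨hint, hzero⟩ := integral_jacExcess_fderiv hlip (R := R) fun x hx =>
    hw0 x fun hxΩ => (hR x hxΩ).not_gt hx
  have hae := ae_fderiv_eq_zero hlip hopen.measurableSet.compl hw0
  have hlow : ∀ᵐ x : ℝ × ℝ, Ω.indicator (fun _ => (1 : ℝ)) x ≤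
      jacExcess (fderiv ℝ w x (1, 0)) (fderiv ℝ w x (0, 1)) := by
    filter_upwards [hae] with x hx
    by_cases hxΩ : x ∈ Ω
    · rw [indicator_of_mem hxΩ, ← det_id_add_sub_one, (hwfd x hxΩ).fderiv, add_sub_cancel]
      linarith [hdet2 x hxΩ]
    · rw [indicator_of_notMem hxΩ, hx hxΩ]
      simp [jacExcess]
  have hfin : volume Ω ≠ ∞ := hbdd.measure_lt_top.ne
  have hle := integral_mono_ae ((integrable_indicator_iff hopen.measurableSet).2
    (integrableOn_const hfin)) hint hlow
  rw [hzero, integral_indicator_const _ hopen.measurableSet, smul_eq_mul, mul_one] at hle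
  have hpos : 0 < volume.real Ω :=
    ENNReal.toReal_pos (hopen.measure_ne_zero volume hconn.nonempty) hfin
  exact absurd hle (not_le.2 hpos)
end

section
/- There exist universal constants C, c > 0 with the following property: for any τ > 0 and any compact set K ⊂ (0,1)² with max{|K|, √|K|·τ} ≤ c, there exists a bi-Lipschitz mapping φ = (φ₁, φ₂) : [0,1]² → [0,1]² satisfying: (i) ‖φ − id‖_{W^{1,p}([0,1]²)} ≤ C |K|^{1/(2p)} τ for all 1 ≤ p ≤ ∞; (ii) ‖φ − id‖_{L^∞([0,1]²)} ≤ C √|K| τ; (iii) |∇φ| ≤ C det ∇φ almost everywhere in [0,1]²; (iv) det ∇φ ≥ 1 + τ almost everywhere on K; (v) det ∇φ ≥ 1 − C √|K| τ almost everywhere on [0,1]²; and, concerning the boundary values, (vi) φ₁(0,s) = φ₂(s,0) = 0 and φ₁(1,s) = φ₂(s,1) = 1 for every s ∈ [0,1]; (vii) ∂_x φ₁(x,y) ≥ 1 − C |K|^{1/2} τ for every (x,y) ∈ [0,1] × {0,1}; (viii) ∂_y φ₂(x,y) ≥ 1 − C |K|^{1/2} τ for every (x,y) ∈ {0,1} ×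 [0,1]. -/
/-!
The map is `φ = id + 4τ (g - M x, u - M y)` for two smooth functions `g`, `u` satisfying the cone
conditions `|∂_y g| ≤ ∂ₓg ≤ 1` and `|∂ₓu| ≤ ∂_y u ≤ 1`. The function `g` rises from `0` on the left
side of the square to `M` on the right side, `u` rises from `0` on the bottom to `M` on the top,
`M` is at most `16 √|K|`, and at every point of `K` one of `∂ₓg`, `∂_y u` equals `1`.

Construction of `g` and `u`. Cover `K` by `N` grid squares of side `δ` with `N δ² ≤ 2 |K|`
(`exists_grid_cover`). Two squares are comparable vertically if one lies in the cone
`|Δx| + δ ≤ Δy` of the other, and horizontally if the same holds with the coordinates exchanged; a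
chain for one order meets a chain for the other in at most one square. Greedy removal of long
vertical chains, together with the theorem of Mirsky, splits the squares into a family of vertical
height at most `√N` and a family of horizontal height at most `√N` (`exists_split`). For a family
of height `m`, a maximum of truncated cones, stacked according to the height function, is a profile
with vertical slope `1` on all squares of the family and total rise `11 δ m`
(`exists_coneProfile`). With `m ≤ √N` this rise is of order `√|K|`. A cutoff and a mollification
preserve the cone condition (`exists_smooth_profile`).

Consequences. Write `a = 1 - 4τM`. The cone conditions give `|∂_y g ∂ₓu| ≤ ∂ₓg ∂_y u`, hence
`det ∇φ ≥ a² + 4 a τ (∂ₓg + ∂_y u)` (`StretchData.det_ge`), which yields all the lower bounds on the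
determinant. Moreover `|∇φ - Id|` is bounded by a multiple of `τ (∂ₓg + ∂_y u + M)`, and
`∫ (∂ₓg + ∂_y u) = 2M` by the divergence theorem; interpolation with the pointwise bound gives the
`W^{1,p}` estimate (`StretchData.sobolev`). Finally, monotonicity of the profiles along cones shows
that `φ` contracts distances at most by the factor `a` (`StretchData.dist_le`), and `φ` is onto
because its range is open and closed.
-/

open MeasureTheory Set
open scoped ENNReal NNReal

/-- `φ` is a bi-Lipschitz map from `s` onto `s`, with inverse `ψ`. -/
def BiLipschitzOn (φ ψ : ℝ × ℝ → ℝ × ℝ) (s : Set (ℝ × ℝ)) : Prop :=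
  Set.BijOn φ s s ∧ Set.InvOn ψ φ s s ∧
    (∃ K : ℝ≥0, LipschitzOnWith K φ s) ∧ ∃ K : ℝ≥0, LipschitzOnWith K ψ s

/-- The closed unit square `[0,1]² ⊆ ℝ²`. -/
def unitSq : Set (ℝ × ℝ) := Set.Icc 0 1 ×ˢ Set.Icc 0 1

/-! ### Splitting a finite set between two transverse orders -/

/-- The theorem of Mirsky, in the form used here: a finite set without an `r`-chain of `n + 1` elements
carries a strictly `r`-increasing height function with values in `{0, …, n - 1}`. The induction on
`n` removes the `r`-minimal elements; it needs the chain to come with its least element `t`. -/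
lemma exists_chain_or_height {α : Type*} [DecidableEq α] (r : α → α → Prop)
    (htr : ∀ a b c, r a b → r b c → r a c) (hirr : ∀ a, ¬ r a a) (n : ℕ) :
    ∀ A : Finset α,
      (∃ T ⊆ A, T.card = n + 1 ∧ (∃ t ∈ T, ∀ x ∈ T, x ≠ t → r t x) ∧
        ∀ x ∈ T, ∀ y ∈ T, x ≠ y → r x y ∨ r y x) ∨
      ∃ h : α → ℕ, (∀ a ∈ A, h a < n) ∧ ∀ a ∈ A, ∀ b ∈ A, r a b → h a < h b := by
  classical
  induction n with
  | zero =>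
    intro A
    rcases A.eq_empty_or_nonempty with rfl | ⟨a, ha⟩
    · right; exact ⟨fun _ => 0, by simp, by simp⟩
    · left
      exact ⟨{a}, by simpa using ha, by simp, ⟨a, by simp, by simp⟩, by simp⟩
  | succ n ih =>
    intro A
    rcases ih (A.filter fun a => ∃ b ∈ A, r b a) with ⟨T, hTA, hcard, ⟨t, htT, ht⟩, hch⟩ | ⟨h, h1, h2⟩
    · left
      obtain ⟨b, hbA, hbt⟩ := (Finset.mem_filter.1 (hTA htT)).2
      have hb : ∀ x ∈ T, r b x := by
        intro x hx
        by_cases hxt : x = t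
        · exact hxt ▸ hbt
        · exact htr _ _ _ hbt (ht x hx hxt)
      have hbT : b ∉ T := fun hbT => hirr b (hb b hbT)
      refine ⟨insert b T, ?_, by simp [hbT, hcard], ⟨b, by simp, ?_⟩, ?_⟩
      · intro x hx
        rcases Finset.mem_insert.1 hx with rfl | hx
        · exact hbA
        · exact (Finset.mem_filter.1 (hTA hx)).1
      · intro x hx hxb
        rcases Finset.mem_insert.1 hx with rfl | hx
        · exact absurd rfl hxb
        · exact hb x hx
      · intro x hx y hy hxy
        rcases Finset.mem_insert.1 hx with hx' | hx' <;>
          rcases Finset.mem_insert.1 hy with hy' | hy'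
        · exact absurd (hx'.trans hy'.symm) hxy
        · exact Or.inl (hx' ▸ hb y hy')
        · exact Or.inr (hy' ▸ hb x hx')
        · exact hch x hx' y hy' hxy
    · right
      refine ⟨fun a => if ∃ b ∈ A, r b a then h a + 1 else 0, ?_, ?_⟩
      · intro a ha
        dsimp only
        split_ifs with hc
        · have := h1 a (Finset.mem_filter.2 ⟨ha, hc⟩)
          omega
        · omega
      · intro a ha b hb hab
        have hcb : ∃ c ∈ A, r c b := ⟨a, ha, hab⟩
        dsimp only
        rw [if_pos hcb]
        split_ifs with hc
        · have := h2 a (Finset.mem_filter.2 ⟨ha, hc⟩) b (Finset.mem_filter.2 ⟨hb, hcb⟩) hab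
          omega
        · omega

/-- Greedy removal of disjoint `r₁`-chains of length `n + 1` from `S`, until the remaining set `A`
has `r₁`-height at most `n`. The removed set `B` is a union of at most `|S| / (n + 1)` such chains,
and by `hex` an `r₂`-chain meets each of them in at most one point. -/
lemma exists_split_aux {α : Type*} [DecidableEq α] (r₁ r₂ : α → α → Prop)
    (htr₁ : ∀ a b c, r₁ a b → r₁ b c → r₁ a c) (hirr₁ : ∀ a, ¬ r₁ a a)
    (hex : ∀ a b, r₁ a b → ¬ r₂ a b ∧ ¬ r₂ b a) (n : ℕ) (S : Finset α) :
    ∃ A B : Finset α, S ⊆ A ∪ B ∧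
      (∃ h : α → ℕ, (∀ a ∈ A, h a < n) ∧ ∀ a ∈ A, ∀ b ∈ A, r₁ a b → h a < h b) ∧
      ∀ Q ⊆ B, (∀ x ∈ Q, ∀ y ∈ Q, x ≠ y → r₂ x y ∨ r₂ y x) → Q.card * (n + 1) ≤ S.card := by
  induction S using Finset.strongInduction with
  | H S ih =>
    rcases exists_chain_or_height r₁ htr₁ hirr₁ n S with ⟨T, hTS, hcard, -, hch⟩ | hh
    · have hTne : T.Nonempty := Finset.card_pos.1 (by omega)
      obtain ⟨A, B, hAB, hA, hB⟩ := ih (S \ T) (Finset.sdiff_ssubset hTS hTne)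
      refine ⟨A, B ∪ T, ?_, hA, ?_⟩
      · intro x hx
        by_cases hxT : x ∈ T
        · simp [hxT]
        · have := hAB (Finset.mem_sdiff.2 ⟨hx, hxT⟩)
          simp only [Finset.mem_union] at this ⊢
          tauto
      · intro Q hQ hQch
        have h1 := hB (Q \ T) (by
          intro x hx
          have := hQ (Finset.mem_sdiff.1 hx).1
          have h2 := (Finset.mem_sdiff.1 hx).2
          simp only [Finset.mem_union] at this
          tauto) (fun x hx y hy => hQch x (Finset.mem_sdiff.1 hx).1 y (Finset.mem_sdiff.1 hy).1)
        -- a chain for one relation meets a chain for the other in at most one point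
        have h2 : (Q ∩ T).card ≤ 1 := by
          rw [Finset.card_le_one]
          intro x hx y hy
          by_contra hxy
          simp only [Finset.mem_inter] at hx hy
          rcases hch x hx.2 y hy.2 hxy with h | h <;>
            rcases hQch x hx.1 y hy.1 hxy with h' | h' <;> have := hex _ _ h <;> tauto
        have h3 := Finset.card_sdiff_add_card_inter Q T
        have h4 := Finset.card_sdiff_add_card_eq_card hTS
        nlinarith
    · refine ⟨S, ∅, by simp, hh, ?_⟩
      intro Q hQ _
      rw [Finset.subset_empty.1 hQ]; simp

/-- If no two elements are comparable for both orders, then a set of fewer than `(n + 1)²` elements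
is covered by a set of `r₁`-height at most `n` and a set of `r₂`-height at most `n`. -/
lemma exists_split {α : Type*} [DecidableEq α] (r₁ r₂ : α → α → Prop)
    (htr₁ : ∀ a b c, r₁ a b → r₁ b c → r₁ a c) (hirr₁ : ∀ a, ¬ r₁ a a)
    (htr₂ : ∀ a b c, r₂ a b → r₂ b c → r₂ a c) (hirr₂ : ∀ a, ¬ r₂ a a)
    (hex : ∀ a b, r₁ a b → ¬ r₂ a b ∧ ¬ r₂ b a) (n : ℕ) (S : Finset α)
    (hS : S.card < (n + 1) * (n + 1)) :
    ∃ A B : Finset α, S ⊆ A ∪ B ∧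
      (∃ h : α → ℕ, (∀ a ∈ A, h a < n) ∧ ∀ a ∈ A, ∀ b ∈ A, r₁ a b → h a < h b) ∧
      (∃ h : α → ℕ, (∀ a ∈ B, h a < n) ∧ ∀ a ∈ B, ∀ b ∈ B, r₂ a b → h a < h b) := by
  obtain ⟨A, B, hAB, hA, hB⟩ := exists_split_aux r₁ r₂ htr₁ hirr₁ hex n S
  refine ⟨A, B, hAB, hA, ?_⟩
  rcases exists_chain_or_height r₂ htr₂ hirr₂ n B with ⟨T, hTB, hcard, -, hch⟩ | hh
  · have := hB T hTB hch
    rw [hcard] at this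
    omega
  · exact hh

/-! ### Cone profiles -/

/-- The derivative-free form of the condition `|∂ₓu| ≤ ∂_y u ≤ 1`: the function `u` increases
along every direction of the cone `|Δx| ≤ Δy`, and has slope at most `1` in the vertical
direction. -/
def ConeProfile (u : ℝ × ℝ → ℝ) : Prop :=
  (∀ p q : ℝ × ℝ, |q.1 - p.1| ≤ q.2 - p.2 → u p ≤ u q) ∧
    ∀ x y t : ℝ, 0 ≤ t → u (x, y + t) ≤ u (x, y) + t

/-- A profile with total rise at most `11δm` and vertical slope `1` near every cell with corner in
`S`, given a height function on `S` with values below `m`.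

It is the maximum of `0` and of the truncated cones
`11δ·h(s) + min(11δ, (y - s₂) - |x - s₁| + 4δ)`, so that the cone at `s` climbs through the height
interval `[11δ·h(s), 11δ·(h(s) + 1)]`. Near the cell of `s` the shift `4δ` makes the cone at `s`
larger than all cones of smaller height index. A cone at `r` with `h(r) ≥ h(s)` is not truncated
there, since truncation would force `|s₁ - r₁| + δ ≤ s₂ - r₂`, hence `h(r) < h(s)`. -/
lemma exists_coneProfile (S : Finset (ℝ × ℝ)) (δ : ℝ) (hδ : 0 < δ) (m : ℕ) (h : ℝ × ℝ → ℕ)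
    (hm : ∀ s ∈ S, h s < m)
    (hh : ∀ a ∈ S, ∀ b ∈ S, |b.1 - a.1| + δ ≤ b.2 - a.2 → h a < h b) :
    ∃ u : ℝ × ℝ → ℝ, ConeProfile u ∧ (∀ p, 0 ≤ u p) ∧ (∀ p, u p ≤ 11 * δ * m) ∧
      ∀ s ∈ S, ∀ x y t : ℝ, 0 ≤ t → |x - s.1| < 3 * δ → -δ < y - s.2 → y + t - s.2 < 3 * δ →
        u (x, y + t) = u (x, y) + t := by
  set v : ℝ × ℝ → ℝ × ℝ → ℝ := fun s p =>
    11 * δ * h s + min (11 * δ) (p.2 - s.2 - |p.1 - s.1| + 4 * δ) with hv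
  obtain ⟨u, hu0, hvu, hul⟩ : ∃ u : ℝ × ℝ → ℝ, (∀ p, 0 ≤ u p) ∧ (∀ s ∈ S, ∀ p, v s p ≤ u p) ∧
      ∀ p c, 0 ≤ c → (∀ s ∈ S, v s p ≤ c) → u p ≤ c := by
    refine ⟨fun p => ((S.sup fun s => (v s p).toNNReal : ℝ≥0) : ℝ), fun p => NNReal.coe_nonneg _,
      ?_, ?_⟩
    · intro s hs p
      exact Real.toNNReal_le_iff_le_coe.1
        (Finset.le_sup (f := fun s => (v s p).toNNReal) hs)
    · intro p c hc hle
      have : (S.sup fun s => (v s p).toNNReal) ≤ c.toNNReal :=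
        Finset.sup_le fun s hs => Real.toNNReal_le_toNNReal (hle s hs)
      calc ((S.sup fun s => (v s p).toNNReal : ℝ≥0) : ℝ) ≤ (c.toNNReal : ℝ) := by exact_mod_cast this
        _ = c := Real.coe_toNNReal c hc
  have hslope : ∀ x y t : ℝ, 0 ≤ t → u (x, y + t) ≤ u (x, y) + t := by
    intro x y t ht
    refine hul _ _ (add_nonneg (hu0 _) ht) fun s hs => ?_
    have h1 := hvu s hs (x, y)
    have : v s (x, y + t) ≤ v s (x, y) + t := by
      simp only [hv]
      rcases min_cases (11 * δ) (y - s.2 - |x - s.1| + 4 * δ) with h | h <;>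
      rcases min_cases (11 * δ) (y + t - s.2 - |x - s.1| + 4 * δ) with h' | h' <;> linarith
    linarith
  refine ⟨u, ⟨?_, hslope⟩, hu0, ?_, ?_⟩
  · intro p q hpq
    refine hul _ _ (hu0 _) fun s hs => le_trans ?_ (hvu s hs q)
    have h1 : |q.1 - s.1| ≤ |q.1 - p.1| + |p.1 - s.1| := abs_sub_le _ _ _
    simp only [hv]
    gcongr 11 * δ * h s + min (11 * δ) ?_
    linarith
  · intro p
    refine hul _ _ (by positivity) fun s hs => ?_
    have h1 : ((h s : ℝ) + 1) ≤ m := by exact_mod_cast hm s hs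
    have h2 := min_le_left (11 * δ) (p.2 - s.2 - |p.1 - s.1| + 4 * δ)
    simp only [hv]
    nlinarith
  · intro s hs x y t ht hx hy hyt
    refine le_antisymm (hslope x y t ht) ?_
    have hpos : 11 * δ * h s < u (x, y) := by
      refine lt_of_lt_of_le ?_ (hvu s hs (x, y))
      simp only [hv]
      have : 0 < min (11 * δ) (y - s.2 - |x - s.1| + 4 * δ) := lt_min (by linarith) (by linarith)
      linarith
    have hmax : u (x, y) ≤ max (11 * δ * h s) (u (x, y + t) - t) := by
      refine hul _ _ (le_max_of_le_left (by positivity)) fun s' hs' => ?_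
      by_cases hlt : h s' < h s
      · apply le_max_of_le_left
        have h1 : ((h s' : ℝ) + 1) ≤ h s := by exact_mod_cast hlt
        have h2 := min_le_left (11 * δ) (y - s'.2 - |x - s'.1| + 4 * δ)
        simp only [hv]
        nlinarith
      · apply le_max_of_le_right
        have h1 : s.2 - s'.2 < |s.1 - s'.1| + δ := by
          by_contra hcon
          exact hlt (hh s' hs' s hs (by linarith))
        have h2 : |s.1 - s'.1| ≤ |x - s.1| + |x - s'.1| := by
          have := abs_sub_le s.1 x s'.1
          rwa [abs_sub_comm s.1 x] at this
        have h3 := hvu s' hs' (x, y + t)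
        have h4 : v s' (x, y + t) = 11 * δ * h s' + (y + t - s'.2 - |x - s'.1| + 4 * δ) := by
          simp only [hv]
          rw [min_eq_right]
          linarith
        have h5 : v s' (x, y) ≤ 11 * δ * h s' + (y - s'.2 - |x - s'.1| + 4 * δ) := by
          simp only [hv]
          gcongr
          exact min_le_right _ _
        linarith
    rcases le_max_iff.1 hmax with h | h
    · linarith
    · linarith

/-- Normalization of the boundary values: a profile with values in `[0, M]` becomes equal to `0`
below height `η` and to `M` above height `1 - η`, without losing vertical slope `1` in between. -/
lemma ConeProfile.cutoff {u : ℝ × ℝ → ℝ} (hu : ConeProfile u) {M η : ℝ} (hM : M ≤ 1 - 2 * η)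
    (h0 : ∀ p, 0 ≤ u p) (h1 : ∀ p, u p ≤ M) :
    ∃ w : ℝ × ℝ → ℝ, ConeProfile w ∧ (∀ p, p.2 ≤ η → w p = 0) ∧ (∀ p, 1 - η ≤ p.2 → w p = M) ∧
      ∀ x y t : ℝ, 0 ≤ t → η ≤ y → y + t ≤ 1 - η → u (x, y + t) = u (x, y) + t →
        w (x, y + t) = w (x, y) + t := by
  have hM0 : 0 ≤ M := (h0 0).trans (h1 0)
  refine ⟨fun p => max (min (u p) (max (p.2 - η) 0)) (M - max (1 - η - p.2) 0), ⟨?_, ?_⟩, ?_, ?_, ?_⟩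
  · intro p q hpq
    have := abs_nonneg (q.1 - p.1)
    have := hu.1 p q hpq
    dsimp only
    gcongr <;> linarith
  · intro x y t ht
    have := hu.2 x y t ht
    have a1 : max (y + t - η) 0 ≤ max (y - η) 0 + t := by
      grind
    have a2 : max (1 - η - y) 0 ≤ max (1 - η - (y + t)) 0 + t := by
      grind
    dsimp only
    rw [← max_add_add_right, ← min_add_add_right]
    gcongr
    linarith
  · intro p hp
    have := h0 p
    dsimp only
    rw [max_eq_right (by linarith : p.2 - η ≤ 0), min_eq_right this, max_eq_left]
    have := le_max_left (1 - η - p.2) 0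
    linarith
  · intro p hp
    have := h1 p
    dsimp only
    rw [max_eq_right (by linarith : 1 - η - p.2 ≤ 0), max_eq_right]
    · simp
    · have := min_le_left (u p) (max (p.2 - η) 0)
      linarith
  · intro x y t ht hy hyt h
    dsimp only
    rw [h, ← max_add_add_right, ← min_add_add_right, max_eq_left (by linarith : 0 ≤ y + t - η),
      max_eq_left (by linarith : 0 ≤ y - η), max_eq_left (by linarith : 0 ≤ 1 - η - (y + t)),
      max_eq_left (by linarith : 0 ≤ 1 - η - y)]
    congr 2 <;> ring

lemma ConeProfile.abs_sub_le {u : ℝ × ℝ → ℝ} (hu : ConeProfile u) (p q : ℝ × ℝ) :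
    |u p - u q| ≤ 2 * ‖p - q‖ := by
  have key : ∀ p q : ℝ × ℝ, u p - u q ≤ 2 * ‖p - q‖ := by
    intro p q
    have h1 : |p.1 - q.1| ≤ ‖p - q‖ := norm_fst_le (p - q)
    have h2 : |p.2 - q.2| ≤ ‖p - q‖ := norm_snd_le (p - q)
    have h3 := hu.1 p (q.1, q.2 + 2 * ‖p - q‖) (by
      rw [abs_sub_comm]
      have := (abs_le.1 h2).2
      simp only
      linarith)
    have h4 := hu.2 q.1 q.2 (2 * ‖p - q‖) (by positivity)
    rw [Prod.mk.eta] at h4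
    linarith
  rw [abs_le]
  have h1 := key p q
  have h2 := key q p
  rw [norm_sub_rev] at h2
  constructor <;> linarith

lemma ConeProfile.lipschitz {u : ℝ × ℝ → ℝ} (hu : ConeProfile u) : LipschitzWith 2 u :=
  LipschitzWith.of_dist_le_mul fun p q => by
    rw [Real.dist_eq, dist_eq_norm]; exact_mod_cast hu.abs_sub_le p q

/-- Mollification at scale `ε` preserves the cone condition, because that condition is stable under
translations and averages. Constancy, and slope `1` over a given vertical increment `t`, survive
at points whose `ε`-neighbourhood has the same property. -/
lemma ConeProfile.mollify {u : ℝ × ℝ → ℝ} (hu : ConeProfile u) {ε : ℝ} (hε : 0 < ε) :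
    ∃ w : ℝ × ℝ → ℝ, ContDiff ℝ 1 w ∧ ConeProfile w ∧
      (∀ p c, (∀ q, ‖q - p‖ < ε → u q = c) → w p = c) ∧
      ∀ p t, (∀ q : ℝ × ℝ, ‖q - p‖ < ε → u (q.1, q.2 + t) = u q + t) →
        w (p.1, p.2 + t) = w p + t := by
  let ρ : ContDiffBump (0 : ℝ × ℝ) := ⟨ε / 2, ε, by positivity, by linarith⟩
  set f := ρ.normed (volume : Measure (ℝ × ℝ)) with hf
  have hcont := hu.lipschitz.continuous
  have hf0 : ∀ t, 0 ≤ f t := fun t => ρ.nonneg_normed t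
  have hf1 : ∫ t, f t = 1 := ρ.integral_normed
  have hfint : Integrable f := ρ.integrable_normed
  have hfsupp : ∀ t, f t ≠ 0 → ‖t‖ < ε := by
    intro t ht
    have : t ∈ Function.support f := ht
    rw [hf, ρ.support_normed_eq] at this
    simpa using this
  have hint : ∀ p, Integrable (fun t => f t * u (p - t)) := by
    intro p
    refine Continuous.integrable_of_hasCompactSupport ?_ ?_
    · exact ρ.continuous_normed.mul (by fun_prop)
    · exact ρ.hasCompactSupport_normed.mul_right
  have hshift : ∀ p t, (p.1, p.2 + t) = p + ((0, t) : ℝ × ℝ) := by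
    intro p t; ext <;> simp
  refine ⟨fun p => ∫ t, f t * u (p - t), ?_, ⟨?_, ?_⟩, ?_, ?_⟩
  · exact ρ.hasCompactSupport_normed.contDiff_convolution_left (n := 1)
      (ContinuousLinearMap.lsmul ℝ ℝ) (by exact_mod_cast ρ.contDiff_normed (n := 1))
      hcont.locallyIntegrable
  · intro p q hpq
    refine integral_mono (hint p) (hint q) fun t => ?_
    refine mul_le_mul_of_nonneg_left (hu.1 _ _ ?_) (hf0 t)
    simpa using hpq
  · intro x y t ht
    calc ∫ s, f s * u ((x, y + t) - s)
        ≤ ∫ s, (f s * u ((x, y) - s) + f s * t) := by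
          refine integral_mono (hint _) ((hint _).add (hfint.mul_const t)) fun s => ?_
          have h1 := hu.2 (x - s.1) (y - s.2) t ht
          have h2 : ((x, y + t) : ℝ × ℝ) - s = (x - s.1, y - s.2 + t) := by
            ext <;> simp
            ring
          have h3 : ((x, y) : ℝ × ℝ) - s = (x - s.1, y - s.2) := by ext <;> simp
          dsimp only
          rw [h2, h3, ← mul_add]
          exact mul_le_mul_of_nonneg_left h1 (hf0 s)
      _ = (∫ s, f s * u ((x, y) - s)) + t := by
          rw [integral_add (hint _) (hfint.mul_const t), integral_mul_const, hf1, one_mul]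
  · intro p c h
    have : ∀ t, f t * u (p - t) = f t * c := by
      intro t
      by_cases ht : f t = 0
      · simp [ht]
      · rw [h (p - t) (by simpa using hfsupp t ht)]
    simp only [this]
    rw [integral_mul_const, hf1, one_mul]
  · intro p t h
    have : ∀ s, f s * u ((p.1, p.2 + t) - s) = f s * u (p - s) + f s * t := by
      intro s
      by_cases hs : f s = 0
      · simp [hs]
      · have := h (p - s) (by simpa using hfsupp s hs)
        rw [← mul_add, ← this, hshift, hshift]
        congr 2
        abel
    simp only [this]
    rw [integral_add (hint p) (hfint.mul_const t), integral_mul_const, hf1, one_mul]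

lemma ConeProfile.fderiv_bounds {u : ℝ × ℝ → ℝ} (hu : ConeProfile u) {p : ℝ × ℝ}
    (hd : DifferentiableAt ℝ u p) :
    |fderiv ℝ u p (1, 0)| ≤ fderiv ℝ u p (0, 1) ∧ fderiv ℝ u p (0, 1) ≤ 1 := by
  -- one-sided difference quotients along the direction `v`
  have hdir : ∀ v : ℝ × ℝ, Filter.Tendsto (fun t : ℝ => t⁻¹ * (u (p + t • v) - u p))
      (nhdsWithin 0 (Ioi 0)) (nhds (fderiv ℝ u p v)) := by
    intro v
    have h := (hd.hasFDerivAt.hasLineDerivAt v).tendsto_slope_zero_right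
    simpa using h
  have hcone : ∀ v : ℝ × ℝ, |v.1| ≤ v.2 → 0 ≤ fderiv ℝ u p v := by
    intro v hv
    refine ge_of_tendsto (hdir v) ?_
    filter_upwards [self_mem_nhdsWithin] with t ht
    have ht : 0 < t := ht
    have := hu.1 p (p + t • v) (by
      simp only [Prod.fst_add, Prod.snd_add, Prod.smul_fst, Prod.smul_snd, smul_eq_mul,
        add_sub_cancel_left, abs_mul, abs_of_pos ht]
      gcongr)
    exact mul_nonneg (by positivity) (by linarith)
  constructor
  · have h1 := hcone ((1, 0) + (0, 1)) (by simp)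
    have h2 := hcone (-(1, 0) + (0, 1)) (by simp)
    rw [map_add] at h1 h2
    rw [map_neg] at h2
    rw [abs_le]; constructor <;> linarith
  · refine le_of_tendsto (hdir (0, 1)) ?_
    filter_upwards [self_mem_nhdsWithin] with t ht
    have ht : 0 < t := ht
    have := hu.2 p.1 p.2 t ht.le
    have e : p + t • ((0, 1) : ℝ × ℝ) = (p.1, p.2 + t) := by ext <;> simp
    rw [e, inv_mul_le_iff₀ ht]
    rw [Prod.mk.eta] at this
    linarith

/-- Slope `1` in the upward direction suffices to identify the vertical partial derivative. -/
lemma fderiv_eq_one_of_slope {u : ℝ × ℝ → ℝ} {p : ℝ × ℝ} (hd : DifferentiableAt ℝ u p) {r : ℝ}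
    (hr : 0 < r) (h : ∀ t, 0 ≤ t → t < r → u (p.1, p.2 + t) = u p + t) :
    fderiv ℝ u p (0, 1) = 1 := by
  have h1 := (hd.hasFDerivAt.hasLineDerivAt (0, 1)).tendsto_slope_zero_right
  refine tendsto_nhds_unique h1 (tendsto_const_nhds.congr' ?_)
  filter_upwards [Ioo_mem_nhdsGT hr] with t ht
  have e : p + t • ((0, 1) : ℝ × ℝ) = (p.1, p.2 + t) := by ext <;> simp
  have ht0 := ht.1.ne'
  simp only [e, h t ht.1.le ht.2, smul_eq_mul]
  field_simp
  ring

/-! ### Covering by grid squares and smooth profiles -/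

/-- By outer regularity and compactness, `K` is covered by `N` grid squares of an arbitrarily small
side `δ`, with `N δ² ≤ 2 |K|`. The set `S` consists of their lower left corners. -/
lemma exists_grid_cover {K : Set (ℝ × ℝ)} (hK : IsCompact K)
    (hKsq : K ⊆ Ioo (0 : ℝ) 1 ×ˢ Ioo (0 : ℝ) 1) (hpos : 0 < (volume K).toReal) {δ₀ : ℝ}
    (hδ₀ : 0 < δ₀) :
    ∃ δ > 0, δ ≤ δ₀ ∧ ∃ S : Finset (ℝ × ℝ), S.card * δ ^ 2 ≤ 2 * (volume K).toReal ∧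
      ∀ p ∈ K, ∃ s ∈ S, 0 ≤ p.1 - s.1 ∧ p.1 - s.1 < δ ∧ 0 ≤ p.2 - s.2 ∧ p.2 - s.2 < δ := by
  classical
  have hfin : volume K ≠ ⊤ := hK.measure_lt_top.ne
  obtain ⟨V, hKV, hVo, hV⟩ := K.exists_isOpen_lt_of_lt (μ := volume) (2 * volume K) (by
    have h0 : volume K ≠ 0 := fun h => by simp [h] at hpos
    rw [two_mul]
    exact ENNReal.lt_add_right hfin h0)
  obtain ⟨r, hr, hrV⟩ := hK.exists_thickening_subset_open hVo hKV
  set δ := min r δ₀ with hδ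
  have hδpos : 0 < δ := lt_min hr hδ₀
  set cell : ℤ × ℤ → Set (ℝ × ℝ) := fun i =>
    Ico (i.1 * δ) (i.1 * δ + δ) ×ˢ Ico (i.2 * δ) (i.2 * δ + δ) with hcell
  set idx : ℝ × ℝ → ℤ × ℤ := fun p => (⌊p.1 / δ⌋, ⌊p.2 / δ⌋) with hidx
  have h1d : ∀ (x : ℝ) (i : ℤ), x ∈ Ico (i * δ) (i * δ + δ) ↔ ⌊x / δ⌋ = i := by
    intro x i
    rw [Int.floor_eq_iff, le_div_iff₀ hδpos, div_lt_iff₀ hδpos, mem_Ico, add_mul, one_mul]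
  have hmem : ∀ p i, p ∈ cell i ↔ idx p = i := by
    intro p i
    simp only [hcell, hidx, mem_prod, h1d, Prod.ext_iff]
  have hfinK : (Set.image idx K).Finite := by
    refine (Set.finite_Icc ((0, 0) : ℤ × ℤ) (⌊1 / δ⌋, ⌊1 / δ⌋)).subset ?_
    rintro _ ⟨p, hp, rfl⟩
    obtain ⟨⟨h1, h2⟩, h3, h4⟩ := hKsq hp
    refine ⟨⟨?_, ?_⟩, ⟨?_, ?_⟩⟩ <;> simp only [hidx]
    · exact Int.floor_nonneg.2 (by positivity)
    · exact Int.floor_nonneg.2 (by positivity)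
    · exact Int.floor_mono (by gcongr)
    · exact Int.floor_mono (by gcongr)
  set I := hfinK.toFinset with hI
  have hvol : ∀ i, volume (cell i) = ENNReal.ofReal (δ ^ 2) := by
    intro i
    rw [hcell, Measure.volume_eq_prod, Measure.prod_prod, Real.volume_Ico, Real.volume_Ico,
      ← ENNReal.ofReal_mul (by linarith)]
    congr 1; ring
  have hsub : (⋃ i ∈ I, cell i) ⊆ V := by
    refine iUnion₂_subset fun i hi => ?_
    obtain ⟨p, hp, hpi⟩ := (hfinK.mem_toFinset).1 hi
    intro q hq
    refine hrV (Metric.mem_thickening_iff.2 ⟨p, hp, ?_⟩)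
    have hp' := (hmem p i).2 hpi
    obtain ⟨⟨a1, a2⟩, a3, a4⟩ := hq
    obtain ⟨⟨b1, b2⟩, b3, b4⟩ := hp'
    refine lt_of_lt_of_le ?_ (min_le_left r δ₀)
    rw [Prod.dist_eq, Real.dist_eq, Real.dist_eq]
    refine max_lt ?_ ?_ <;> rw [abs_lt] <;> constructor <;> linarith
  have hmeas : volume (⋃ i ∈ I, cell i) = I.card * ENNReal.ofReal (δ ^ 2) := by
    rw [measure_biUnion_finset]
    · simp [hvol]
    · intro i _ j _ hij
      refine Set.disjoint_left.2 fun p hp hp' => hij ?_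
      rw [← (hmem p i).1 hp, (hmem p j).1 hp']
    · intro i _
      exact measurableSet_Ico.prod measurableSet_Ico
  refine ⟨δ, hδpos, min_le_right _ _, I.image fun i => ((i.1 * δ, i.2 * δ) : ℝ × ℝ), ?_, ?_⟩
  · have h1 : (I.card : ℝ≥0∞) * ENNReal.ofReal (δ ^ 2) ≤ 2 * volume K := by
      rw [← hmeas]; exact (measure_mono hsub).trans hV.le
    have h2 := ENNReal.toReal_mono (by finiteness) h1
    simp only [ENNReal.toReal_mul, ENNReal.toReal_natCast, ENNReal.toReal_ofNat,
      ENNReal.toReal_ofReal (sq_nonneg δ)] at h2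
    refine le_trans ?_ h2
    gcongr
    exact Finset.card_image_le
  · intro p hp
    have hi : idx p ∈ I := (hfinK.mem_toFinset).2 ⟨p, hp, rfl⟩
    obtain ⟨⟨b1, b2⟩, b3, b4⟩ := (hmem p _).2 rfl
    refine ⟨_, Finset.mem_image_of_mem _ hi, ?_, ?_, ?_, ?_⟩ <;> dsimp only <;> linarith

/-- The profile of a family `A` of grid squares of bounded height: it rises from `0` on the bottom
side to `11δm` on the top side, with vertical derivative `1` on the squares of `A`, away from the
top and bottom of the unit square. -/
lemma exists_smooth_profile (A : Finset (ℝ × ℝ)) {δ η : ℝ} (hδ : 0 < δ) (hδη : δ ≤ η) (m : ℕ)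
    (h : ℝ × ℝ → ℕ) (hm : ∀ s ∈ A, h s < m)
    (hh : ∀ a ∈ A, ∀ b ∈ A, |b.1 - a.1| + δ ≤ b.2 - a.2 → h a < h b)
    (hM : 11 * δ * m ≤ 1 - 2 * η) :
    ∃ u : ℝ × ℝ → ℝ, ContDiff ℝ 1 u ∧ ConeProfile u ∧ (∀ p, p.2 ≤ 0 → u p = 0) ∧
      (∀ p, 1 ≤ p.2 → u p = 11 * δ * m) ∧
      ∀ p : ℝ × ℝ, 3 * η ≤ p.2 → p.2 ≤ 1 - 3 * η →
        (∃ s ∈ A, 0 ≤ p.1 - s.1 ∧ p.1 - s.1 < δ ∧ 0 ≤ p.2 - s.2 ∧ p.2 - s.2 < δ) →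
        fderiv ℝ u p (0, 1) = 1 := by
  obtain ⟨u₀, hu₀, h0, h1, hs₀⟩ := exists_coneProfile A δ hδ m h hm hh
  obtain ⟨u₁, hu₁, hb, ht, hs₁⟩ := hu₀.cutoff hM h0 h1
  obtain ⟨u, hsm, hu, hc, hsl⟩ := hu₁.mollify (half_pos hδ)
  have hnear : ∀ p q : ℝ × ℝ, ‖q - p‖ < δ / 2 →
      |q.1 - p.1| < δ / 2 ∧ |q.2 - p.2| < δ / 2 := fun p q hq =>
    ⟨(norm_fst_le (q - p)).trans_lt hq, (norm_snd_le (q - p)).trans_lt hq⟩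
  refine ⟨u, hsm, hu, ?_, ?_, ?_⟩
  · intro p hp
    refine hc p 0 fun q hq => hb q ?_
    have := abs_lt.1 (hnear p q hq).2
    linarith
  · intro p hp
    refine hc p _ fun q hq => ht q ?_
    have := abs_lt.1 (hnear p q hq).2
    linarith
  · rintro p hp1 hp2 ⟨s, hsA, a1, a2, a3, a4⟩
    refine fderiv_eq_one_of_slope (hsm.differentiable one_ne_zero p) (half_pos hδ)
      fun t ht0 ht1 => hsl p t fun q hq => ?_
    obtain ⟨b1, b2⟩ := hnear p q hq
    rw [abs_lt] at b1 b2
    refine hs₁ q.1 q.2 t ht0 (by linarith) (by linarith) (hs₀ s hsA q.1 q.2 t ht0 ?_ ?_ ?_)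
    · rw [abs_lt]; constructor <;> linarith
    · linarith
    · linarith

/-! ### Linear maps of the plane and an `L^p` estimate -/

lemma clm_apply_eq (L : ℝ × ℝ →L[ℝ] ℝ × ℝ) (h : ℝ × ℝ) :
    L h = h.1 • L (1, 0) + h.2 • L (0, 1) := by
  rw [← map_smul, ← map_smul, ← map_add]
  congr 1
  ext <;> simp

lemma clm_det_eq (L : ℝ × ℝ →L[ℝ] ℝ × ℝ) :
    L.det = (L (1, 0)).1 * (L (0, 1)).2 - (L (0, 1)).1 * (L (1, 0)).2 := by
  rw [ContinuousLinearMap.det, ← LinearMap.det_toMatrix (Module.Basis.finTwoProd ℝ),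
    Matrix.det_fin_two]
  simp [LinearMap.toMatrix_apply]

lemma clm_norm_le (L : ℝ × ℝ →L[ℝ] ℝ × ℝ) : ‖L‖ ≤ ‖L (1, 0)‖ + ‖L (0, 1)‖ := by
  refine L.opNorm_le_bound (by positivity) fun h => ?_
  rw [clm_apply_eq L h]
  refine (norm_add_le _ _).trans ?_
  rw [norm_smul, norm_smul, add_mul, mul_comm ‖L (1, 0)‖, mul_comm ‖L (0, 1)‖]
  gcongr
  · exact norm_fst_le h
  · exact norm_snd_le h

/-- Interpolation between `L^1` and `L^∞`: if `|f| ≤ bG` with `0 ≤ G ≤ 1` and `∫ G ≤ B`, then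
`‖f‖_p ≤ b B^{1/p}`, because `G^p ≤ G`. For `p = ∞` the exponent `1 / p.toReal` is `1 / 0 = 0`, as
it should be. -/
lemma eLpNorm_le_of_norm_le_mul {E : Type*} [NormedAddCommGroup E] {f : ℝ × ℝ → E}
    {G : ℝ × ℝ → ℝ} {μ : Measure (ℝ × ℝ)} {b B : ℝ} (hb : 0 ≤ b) (hB : 0 ≤ B)
    (hG0 : ∀ᵐ x ∂μ, 0 ≤ G x) (hG1 : ∀ᵐ x ∂μ, G x ≤ 1) (hGi : Integrable G μ)
    (hGB : ∫ x, G x ∂μ ≤ B) (hf : ∀ᵐ x ∂μ, ‖f x‖ ≤ b * G x) {p : ℝ≥0∞} (hp : 1 ≤ p) :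
    eLpNorm f p μ ≤ ENNReal.ofReal (b * B ^ (1 / p.toReal)) := by
  by_cases hpt : p = ⊤
  · subst hpt
    simp only [ENNReal.toReal_top, div_zero, Real.rpow_zero, mul_one, eLpNorm_exponent_top]
    refine eLpNormEssSup_le_of_ae_bound ?_
    filter_upwards [hf, hG1] with x hx hx1
    nlinarith
  · have hp0 : p ≠ 0 := (zero_lt_one.trans_le hp).ne'
    have hp1 : 1 ≤ p.toReal := by
      simpa using ENNReal.toReal_mono hpt hp
    have hppos : 0 < p.toReal := by linarith
    rw [eLpNorm_eq_lintegral_rpow_enorm_toReal hp0 hpt]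
    have hint : ∫⁻ x, ‖f x‖ₑ ^ p.toReal ∂μ ≤
        ENNReal.ofReal b ^ p.toReal * ENNReal.ofReal B := by
      calc ∫⁻ x, ‖f x‖ₑ ^ p.toReal ∂μ
          ≤ ∫⁻ x, ENNReal.ofReal b ^ p.toReal * ENNReal.ofReal (G x) ∂μ := by
            refine lintegral_mono_ae ?_
            filter_upwards [hf, hG0, hG1] with x hx hx0 hx1
            calc ‖f x‖ₑ ^ p.toReal ≤ ENNReal.ofReal (b * G x) ^ p.toReal := by
                  gcongr
                  rw [← ofReal_norm]
                  exact ENNReal.ofReal_le_ofReal hx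
              _ = ENNReal.ofReal b ^ p.toReal * ENNReal.ofReal (G x) ^ p.toReal := by
                  rw [ENNReal.ofReal_mul hb, ENNReal.mul_rpow_of_nonneg _ _ hppos.le]
              _ ≤ ENNReal.ofReal b ^ p.toReal * ENNReal.ofReal (G x) := by
                  gcongr
                  exact ENNReal.rpow_le_self_of_le_one (by simpa using hx1) hp1
        _ = ENNReal.ofReal b ^ p.toReal * ∫⁻ x, ENNReal.ofReal (G x) ∂μ :=
            lintegral_const_mul' _ _ (by finiteness)
        _ ≤ ENNReal.ofReal b ^ p.toReal * ENNReal.ofReal B := by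
            rw [← ofReal_integral_eq_lintegral_ofReal hGi hG0]
            gcongr
    calc (∫⁻ x, ‖f x‖ₑ ^ p.toReal ∂μ) ^ (1 / p.toReal)
        ≤ (ENNReal.ofReal b ^ p.toReal * ENNReal.ofReal B) ^ (1 / p.toReal) := by gcongr
      _ = ENNReal.ofReal (b * B ^ (1 / p.toReal)) := by
        rw [ENNReal.mul_rpow_of_nonneg _ _ (by positivity), ← ENNReal.rpow_mul,
          mul_one_div_cancel hppos.ne', ENNReal.rpow_one, ENNReal.ofReal_mul hb,
          ENNReal.ofReal_rpow_of_nonneg hB (by positivity)]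

/-! ### The stretching map -/

/-- The map `id + σ (g - M x, u - M y)`. The linear terms compensate the total rise `M` of the
profiles, so that each side of the unit square is mapped into its own line. -/
noncomputable def stretch (σ M : ℝ) (g u : ℝ × ℝ → ℝ) (p : ℝ × ℝ) : ℝ × ℝ :=
  (p.1 + σ * (g p - M * p.1), p.2 + σ * (u p - M * p.2))

/-- The properties of the horizontal profile `g` and the vertical profile `u` that make
`stretch σ M g u` a bi-Lipschitz map of the unit square. The cone condition on `g`, namely
`|∂_y g| ≤ ∂ₓg ≤ 1`, is expressed by exchanging the two coordinates. -/
structure StretchData (σ M : ℝ) (g u : ℝ × ℝ → ℝ) : Prop where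
  pos : 0 < σ
  nonneg : 0 ≤ M
  small : σ * M ≤ 1 / 2
  le_one : M ≤ 1
  smooth_g : ContDiff ℝ 1 g
  smooth_u : ContDiff ℝ 1 u
  cone_g : ConeProfile fun p => g p.swap
  cone_u : ConeProfile u
  g_left : ∀ p : ℝ × ℝ, p.1 ≤ 0 → g p = 0
  g_right : ∀ p : ℝ × ℝ, 1 ≤ p.1 → g p = M
  u_bot : ∀ p : ℝ × ℝ, p.2 ≤ 0 → u p = 0
  u_top : ∀ p : ℝ × ℝ, 1 ≤ p.2 → u p = M

namespace StretchData
variable {σ M : ℝ} {g u : ℝ × ℝ → ℝ}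

lemma bounds_u (H : StretchData σ M g u) (p : ℝ × ℝ) :
    |fderiv ℝ u p (1, 0)| ≤ fderiv ℝ u p (0, 1) ∧ fderiv ℝ u p (0, 1) ≤ 1 :=
  H.cone_u.fderiv_bounds (H.smooth_u.differentiable one_ne_zero p)

lemma fderiv_swap {f : ℝ × ℝ → ℝ} (hf : ContDiff ℝ 1 f) (p v : ℝ × ℝ) :
    fderiv ℝ (fun p => f p.swap) p v = fderiv ℝ f p.swap v.swap := by
  have h1 := (hf.differentiable one_ne_zero p.swap).hasFDerivAt
  have h2 : HasFDerivAt (Prod.swap : ℝ × ℝ → ℝ × ℝ)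
      (ContinuousLinearEquiv.prodComm ℝ ℝ ℝ : ℝ × ℝ →L[ℝ] ℝ × ℝ) p :=
    (ContinuousLinearEquiv.prodComm ℝ ℝ ℝ).hasFDerivAt
  have h3 := (HasFDerivAt.comp p h1 h2).fderiv
  change fderiv ℝ (f ∘ Prod.swap) p v = _
  rw [h3]
  rfl

lemma bounds_g (H : StretchData σ M g u) (p : ℝ × ℝ) :
    |fderiv ℝ g p (0, 1)| ≤ fderiv ℝ g p (1, 0) ∧ fderiv ℝ g p (1, 0) ≤ 1 := by
  have hsm : ContDiff ℝ 1 fun p : ℝ × ℝ => g p.swap :=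
    H.smooth_g.comp (contDiff_snd.prodMk contDiff_fst)
  have := H.cone_g.fderiv_bounds (hsm.differentiable one_ne_zero p.swap)
  simpa [fderiv_swap H.smooth_g] using this

lemma contDiff (H : StretchData σ M g u) : ContDiff ℝ 1 (stretch σ M g u) := by
  have h1 := H.smooth_g
  have h2 := H.smooth_u
  unfold stretch
  fun_prop

lemma fderiv_apply (H : StretchData σ M g u) (p v : ℝ × ℝ) :
    fderiv ℝ (stretch σ M g u) p v =
      (v.1 + σ * (fderiv ℝ g p v - M * v.1), v.2 + σ * (fderiv ℝ u p v - M * v.2)) := by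
  have h1 := (H.smooth_g.differentiable one_ne_zero p).hasFDerivAt
  have h2 := (H.smooth_u.differentiable one_ne_zero p).hasFDerivAt
  have hf : HasFDerivAt (Prod.fst : ℝ × ℝ → ℝ) (ContinuousLinearMap.fst ℝ ℝ ℝ) p := hasFDerivAt_fst
  have hs : HasFDerivAt (Prod.snd : ℝ × ℝ → ℝ) (ContinuousLinearMap.snd ℝ ℝ ℝ) p := hasFDerivAt_snd
  have h3 := (hf.add ((h1.sub (hf.const_mul M)).const_mul σ)).prodMk
    (hs.add ((h2.sub (hs.const_mul M)).const_mul σ))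
  have h4 : HasFDerivAt (stretch σ M g u) _ p := h3
  rw [h4.fderiv]
  simp

/-- The mixed term of the determinant is harmless: the two cone conditions give
`|∂_y g ∂ₓu| ≤ ∂ₓg ∂_y u`. -/
lemma det_ge (H : StretchData σ M g u) (p : ℝ × ℝ) :
    (1 - σ * M) ^ 2 + (1 - σ * M) * (σ * (fderiv ℝ g p (1, 0) + fderiv ℝ u p (0, 1))) ≤
      (fderiv ℝ (stretch σ M g u) p).det := by
  rw [clm_det_eq, H.fderiv_apply, H.fderiv_apply]
  obtain ⟨h1, -⟩ := H.bounds_g p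
  obtain ⟨h2, -⟩ := H.bounds_u p
  have h3 : fderiv ℝ g p (0, 1) * fderiv ℝ u p (1, 0) ≤
      fderiv ℝ g p (1, 0) * fderiv ℝ u p (0, 1) := by
    refine (le_abs_self _).trans ?_
    rw [abs_mul]
    exact mul_le_mul h1 h2 (abs_nonneg _) ((abs_nonneg _).trans h1)
  have h4 := mul_le_mul_of_nonneg_left h3 (sq_nonneg σ)
  simp only
  nlinarith

lemma norm_fderiv_le (H : StretchData σ M g u) (p : ℝ × ℝ) :
    ‖fderiv ℝ (stretch σ M g u) p‖ ≤ 8 * (fderiv ℝ (stretch σ M g u) p).det := by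
  refine le_trans ?_ (mul_le_mul_of_nonneg_left (H.det_ge p) (by norm_num))
  refine (clm_norm_le _).trans ?_
  rw [H.fderiv_apply, H.fderiv_apply]
  obtain ⟨h1, -⟩ := H.bounds_g p
  obtain ⟨h2, -⟩ := H.bounds_u p
  set gx := fderiv ℝ g p (1, 0)
  set gy := fderiv ℝ g p (0, 1)
  set ux := fderiv ℝ u p (1, 0)
  set uy := fderiv ℝ u p (0, 1)
  have hgx : 0 ≤ gx := (abs_nonneg _).trans h1
  have huy : 0 ≤ uy := (abs_nonneg _).trans h2
  have hσ := H.pos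
  have hM := H.nonneg
  have hs := H.small
  have hσM : 0 ≤ σ * M := by positivity
  have b1 : σ * |gy| ≤ σ * gx := by gcongr
  have b2 : σ * |ux| ≤ σ * uy := by gcongr
  have c1 : 0 ≤ σ * gx := by positivity
  have c2 : 0 ≤ σ * uy := by positivity
  simp only [Prod.norm_def, Real.norm_eq_abs]
  have e1 : max |1 + σ * (gx - M * 1)| |0 + σ * (ux - M * 0)| ≤ 1 + σ * (gx + uy) := by
    refine max_le ?_ ?_
    · rw [abs_le]; constructor <;> nlinarith
    · rw [mul_zero, sub_zero, zero_add, abs_mul, abs_of_pos hσ]; nlinarith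
  have e2 : max |0 + σ * (gy - M * 0)| |1 + σ * (uy - M * 1)| ≤ 1 + σ * (gx + uy) := by
    refine max_le ?_ ?_
    · rw [mul_zero, sub_zero, zero_add, abs_mul, abs_of_pos hσ]; nlinarith
    · rw [abs_le]; constructor <;> nlinarith
  have e3 : 0 ≤ σ * (gx + uy) := by positivity
  nlinarith

/-- The bound is written as a multiple of a function with values in `[0, 1]`, as required by
`eLpNorm_le_of_norm_le_mul`. -/
lemma norm_fderiv_sub_le (H : StretchData σ M g u) (p : ℝ × ℝ) :
    ‖fderiv ℝ (stretch σ M g u) p - ContinuousLinearMap.id ℝ (ℝ × ℝ)‖ ≤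
      6 * σ * ((fderiv ℝ g p (1, 0) + fderiv ℝ u p (0, 1) + M) / 3) := by
  refine (clm_norm_le _).trans ?_
  rw [sub_apply, sub_apply, H.fderiv_apply, H.fderiv_apply]
  obtain ⟨h1, -⟩ := H.bounds_g p
  obtain ⟨h2, -⟩ := H.bounds_u p
  set gx := fderiv ℝ g p (1, 0)
  set gy := fderiv ℝ g p (0, 1)
  set ux := fderiv ℝ u p (1, 0)
  set uy := fderiv ℝ u p (0, 1)
  have hgx : 0 ≤ gx := (abs_nonneg _).trans h1
  have huy : 0 ≤ uy := (abs_nonneg _).trans h2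
  have hσ := H.pos
  have hM := H.nonneg
  have key : ∀ z : ℝ, |z| ≤ gx + uy + M → |σ * z| ≤ σ * (gx + uy + M) := by
    intro z hz
    rw [abs_mul, abs_of_pos hσ]; gcongr
  have e1 := key (gx - M) (by rw [abs_le]; constructor <;> linarith)
  have e2 := key (uy - M) (by rw [abs_le]; constructor <;> linarith)
  have e3 := key ux (by linarith)
  have e4 := key gy (by linarith)
  simp only [Prod.norm_def, Real.norm_eq_abs, ContinuousLinearMap.id_apply, Prod.fst_sub,
    Prod.snd_sub, mul_one, mul_zero, sub_zero, zero_add, add_sub_cancel_left]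
  have := max_le e1 e3
  have := max_le e4 e2
  linarith

lemma mem_Icc_u (H : StretchData σ M g u) (p : ℝ × ℝ) : 0 ≤ u p ∧ u p ≤ M := by
  constructor
  · have := H.cone_u.1 (p.1, min p.2 0) p (by simp)
    rwa [H.u_bot (p.1, min p.2 0) (min_le_right _ _)] at this
  · have := H.cone_u.1 p (p.1, max p.2 1) (by simp)
    rwa [H.u_top (p.1, max p.2 1) (le_max_right _ _)] at this

lemma mem_Icc_g (H : StretchData σ M g u) (p : ℝ × ℝ) : 0 ≤ g p ∧ g p ≤ M := by
  constructor
  · have := H.cone_g.1 (p.2, min p.1 0) (p.2, p.1) (by simp)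
    dsimp only [Prod.swap_prod_mk] at this
    rwa [H.g_left (min p.1 0, p.2) (min_le_right _ _)] at this
  · have := H.cone_g.1 (p.2, p.1) (p.2, max p.1 1) (by simp)
    dsimp only [Prod.swap_prod_mk] at this
    rwa [H.g_right (max p.1 1, p.2) (le_max_right _ _)] at this

lemma norm_sub_le (H : StretchData σ M g u) {p : ℝ × ℝ} (hp : p ∈ unitSq) :
    ‖stretch σ M g u p - p‖ ≤ σ * M := by
  obtain ⟨⟨h1, h2⟩, h3, h4⟩ := hp
  obtain ⟨a1, a2⟩ := H.mem_Icc_g p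
  obtain ⟨b1, b2⟩ := H.mem_Icc_u p
  have hσ := H.pos
  have hM := H.nonneg
  rw [Prod.norm_def]
  refine max_le ?_ ?_
  · simp only [stretch, Prod.fst_sub, add_sub_cancel_left, Real.norm_eq_abs, abs_mul, abs_of_pos hσ]
    gcongr
    rw [abs_le]; constructor <;> nlinarith
  · simp only [stretch, Prod.snd_sub, add_sub_cancel_left, Real.norm_eq_abs, abs_mul, abs_of_pos hσ]
    gcongr
    rw [abs_le]; constructor <;> nlinarith

/-- The divergence theorem: only the boundary values of `g` and `u` enter. -/
lemma integral_eq (H : StretchData σ M g u) :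
    ∫ p in unitSq, (fderiv ℝ g p (1, 0) + fderiv ℝ u p (0, 1)) = 2 * M := by
  have hsq : unitSq = Icc ((0, 0) : ℝ × ℝ) (1, 1) := by rw [Icc_prod_eq]; rfl
  have hg' := H.smooth_g.continuous_fderiv one_ne_zero
  have hu' := H.smooth_u.continuous_fderiv one_ne_zero
  rw [hsq, integral_divergence_prod_Icc_of_hasFDerivAt_of_le g u (fderiv ℝ g) (fderiv ℝ u) (0, 0)
    (1, 1) (by simp [Prod.le_def]) H.smooth_g.continuous.continuousOn
    H.smooth_u.continuous.continuousOn
    (fun x _ => (H.smooth_g.differentiable one_ne_zero x).hasFDerivAt)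
    (fun x _ => (H.smooth_u.differentiable one_ne_zero x).hasFDerivAt)
    (Continuous.integrableOn_Icc (by fun_prop))]
  simp only [H.u_top (_, 1) le_rfl, H.u_bot (_, 0) le_rfl, H.g_right (1, _) le_rfl,
    H.g_left (0, _) le_rfl, intervalIntegral.integral_const]
  simp
  ring

/-- Of two points, one lies in the vertical or in the horizontal cone of the other. The profile of
that direction then increases, so the larger coordinate increment shrinks at most by the factor
`1 - σM ≥ 1/2`. -/
lemma dist_le (H : StretchData σ M g u) (p q : ℝ × ℝ) :
    dist p q ≤ 2 * dist (stretch σ M g u p) (stretch σ M g u q) := by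
  have hσ := H.pos
  have hs := H.small
  -- the case where the coordinate with the larger increment increases from `p` to `q`
  have key : ∀ p q : ℝ × ℝ, (|q.1 - p.1| ≤ q.2 - p.2 ∨ |q.2 - p.2| ≤ q.1 - p.1) →
      dist p q ≤ 2 * dist (stretch σ M g u p) (stretch σ M g u q) := by
    intro p q h
    rw [dist_comm p q, dist_comm (stretch σ M g u p), dist_eq_norm, dist_eq_norm]
    rcases h with h | h
    · have h1 := H.cone_u.1 p q h
      have h0 := (abs_nonneg _).trans h
      have h2 : ‖q - p‖ = q.2 - p.2 := by
        rw [Prod.norm_def]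
        simp only [Prod.fst_sub, Prod.snd_sub, Real.norm_eq_abs, abs_of_nonneg h0]
        exact max_eq_right h
      have h3 := (le_abs_self _).trans (norm_snd_le (stretch σ M g u q - stretch σ M g u p))
      simp only [stretch, Prod.snd_sub] at h3
      have h4 : 0 ≤ σ * (u q - u p) := mul_nonneg hσ.le (by linarith)
      have h5 := mul_le_mul_of_nonneg_right hs h0
      rw [h2]
      unfold stretch
      linarith
    · have h1 := H.cone_g.1 p.swap q.swap h
      simp only [Prod.swap_swap] at h1
      have h0 := (abs_nonneg _).trans h
      have h2 : ‖q - p‖ = q.1 - p.1 := by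
        rw [Prod.norm_def]
        simp only [Prod.fst_sub, Prod.snd_sub, Real.norm_eq_abs, abs_of_nonneg h0]
        exact max_eq_left h
      have h3 := (le_abs_self _).trans (norm_fst_le (stretch σ M g u q - stretch σ M g u p))
      simp only [stretch, Prod.fst_sub] at h3
      have h4 : 0 ≤ σ * (g q - g p) := mul_nonneg hσ.le (by linarith)
      have h5 := mul_le_mul_of_nonneg_right hs h0
      rw [h2]
      unfold stretch
      linarith
  by_cases hpq : (|q.1 - p.1| ≤ q.2 - p.2 ∨ |q.2 - p.2| ≤ q.1 - p.1)
  · exact key p q hpq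
  · rw [dist_comm p q, dist_comm (stretch σ M g u p)]
    refine key q p ?_
    grind

lemma antilipschitz (H : StretchData σ M g u) : AntilipschitzWith 2 (stretch σ M g u) :=
  AntilipschitzWith.of_le_mul_dist fun p q => by exact_mod_cast H.dist_le p q

lemma lipschitz (H : StretchData σ M g u) : ∃ L : ℝ≥0, LipschitzWith L (stretch σ M g u) := by
  have hσ := H.pos
  have hM := H.nonneg
  refine ⟨(1 + 6 * σ).toNNReal, lipschitzWith_of_nnnorm_fderiv_le
    (H.contDiff.differentiable one_ne_zero) fun p => ?_⟩
  rw [← NNReal.coe_le_coe, Real.coe_toNNReal _ (by positivity), coe_nnnorm]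
  have h1 := H.norm_fderiv_sub_le p
  have h2 := (H.bounds_g p).2
  have h3 := (H.bounds_u p).2
  have h4 := H.le_one
  have h5 : ‖fderiv ℝ (stretch σ M g u) p‖ ≤
      ‖fderiv ℝ (stretch σ M g u) p - ContinuousLinearMap.id ℝ (ℝ × ℝ)‖ + 1 := by
    have h6 := norm_add_le (fderiv ℝ (stretch σ M g u) p - ContinuousLinearMap.id ℝ (ℝ × ℝ))
      (ContinuousLinearMap.id ℝ (ℝ × ℝ))
    rw [sub_add_cancel, ContinuousLinearMap.norm_id] at h6
    exact h6
  have : 6 * σ * ((fderiv ℝ g p (1, 0) + fderiv ℝ u p (0, 1) + M) / 3) ≤ 6 * σ * 1 := by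
    gcongr; linarith
  linarith

lemma det_pos (H : StretchData σ M g u) (p : ℝ × ℝ) : 0 < (fderiv ℝ (stretch σ M g u) p).det := by
  refine lt_of_lt_of_le ?_ (H.det_ge p)
  have h1 := (abs_nonneg _).trans (H.bounds_g p).1
  have h2 := (abs_nonneg _).trans (H.bounds_u p).1
  have hs := H.small
  have hσ := H.pos
  have h3 : 0 < 1 - σ * M := by linarith
  positivity

/-- The range is open by the inverse function theorem, and closed because the map is Lipschitz and
expanding up to a constant. -/
lemma surjective (H : StretchData σ M g u) : Function.Surjective (stretch σ M g u) := by
  have hopen : IsOpenMap (stretch σ M g u) := by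
    refine isOpenMap_iff_nhds_le.2 fun p => ?_
    have h1 : HasStrictFDerivAt (stretch σ M g u) (fderiv ℝ (stretch σ M g u) p) p :=
      H.contDiff.contDiffAt.hasStrictFDerivAt one_ne_zero
    refine (h1.map_nhds_eq_of_surj ?_).ge
    exact LinearMap.range_eq_top.2 (LinearMap.equivOfDetNeZero _ (H.det_pos p).ne').surjective
  obtain ⟨L, hL⟩ := H.lipschitz
  have hclopen : IsClopen (range (stretch σ M g u)) :=
    ⟨H.antilipschitz.isClosed_range hL.uniformContinuous, hopen.isOpen_range⟩
  exact range_eq_univ.1 (hclopen.eq_univ (range_nonempty _))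

/-- Beyond a side of the square the corresponding profile is constant, so there the corresponding
component of the map is affine, fixes the coordinate of that side and is increasing; hence no point
enters or leaves the square. -/
lemma mem_iff (H : StretchData σ M g u) (p : ℝ × ℝ) :
    stretch σ M g u p ∈ unitSq ↔ p ∈ unitSq := by
  obtain ⟨a1, a2⟩ := H.mem_Icc_g p
  obtain ⟨b1, b2⟩ := H.mem_Icc_u p
  have hσ := H.pos
  have hM := H.nonneg
  have hs := H.small
  -- one coordinate `x`, with `z` the value of the corresponding profile
  have key : ∀ x z : ℝ, 0 ≤ z → z ≤ M → (x < 0 → z = 0) → (1 < x → z = M) →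
      (x + σ * (z - M * x) ∈ Icc (0 : ℝ) 1 ↔ x ∈ Icc (0 : ℝ) 1) := by
    intro x z hz0 hzM hl hr
    constructor
    · rintro ⟨h1, h2⟩
      constructor
      · by_contra hx
        rw [hl (by linarith)] at h1
        nlinarith
      · by_contra hx
        rw [hr (by linarith)] at h2
        nlinarith
    · rintro ⟨h1, h2⟩
      have c1 : 0 ≤ σ * z := by positivity
      have c2 : σ * z ≤ σ * M := by gcongr
      constructor <;> nlinarith
  exact and_congr (key p.1 (g p) a1 a2 (fun h => H.g_left p h.le) fun h => H.g_right p h.le)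
    (key p.2 (u p) b1 b2 (fun h => H.u_bot p h.le) fun h => H.u_top p h.le)

lemma biLipschitzOn (H : StretchData σ M g u) :
    ∃ ψ, BiLipschitzOn (stretch σ M g u) ψ unitSq := by
  obtain ⟨ψ, hψ⟩ := H.surjective.hasRightInverse
  obtain ⟨L, hL⟩ := H.lipschitz
  have hinj := H.antilipschitz.injective
  refine ⟨ψ, ⟨fun p hp => (H.mem_iff p).2 hp, hinj.injOn, fun q hq => ⟨ψ q, ?_, hψ q⟩⟩,
    ⟨fun p _ => hinj (hψ _), fun q _ => hψ q⟩, ⟨L, hL.lipschitzOnWith⟩,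
    ⟨2, (H.antilipschitz.to_rightInverse hψ).lipschitzOnWith⟩⟩
  rw [← H.mem_iff, hψ q]
  exact hq

end StretchData

/-! ### Profiles adapted to a compact set -/

lemma exists_margin {K : Set (ℝ × ℝ)} (hK : IsCompact K)
    (hKsq : K ⊆ Ioo (0 : ℝ) 1 ×ˢ Ioo (0 : ℝ) 1) :
    ∃ η > 0, η ≤ 1 / 8 ∧ ∀ p ∈ K, 3 * η ≤ p.1 ∧ p.1 ≤ 1 - 3 * η ∧ 3 * η ≤ p.2 ∧
      p.2 ≤ 1 - 3 * η := by
  obtain ⟨r, hr, hrV⟩ := hK.exists_thickening_subset_open (isOpen_Ioo.prod isOpen_Ioo) hKsq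
  refine ⟨min (r / 6) (1 / 8), by positivity, min_le_right _ _, fun p hp => ?_⟩
  have hη := min_le_left (r / 6) (1 / 8)
  have hq : ∀ t : ℝ, |t| < r → (p.1 + t, p.2 + t) ∈ Ioo (0 : ℝ) 1 ×ˢ Ioo (0 : ℝ) 1 := by
    intro t ht
    refine hrV (Metric.mem_thickening_iff.2 ⟨p, hp, ?_⟩)
    rw [Prod.dist_eq, Real.dist_eq, Real.dist_eq]
    simpa using ht
  obtain ⟨⟨a1, a2⟩, a3, a4⟩ := hq (r / 2) (by rw [abs_of_pos] <;> linarith)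
  obtain ⟨⟨b1, b2⟩, b3, b4⟩ := hq (-(r / 2)) (by rw [abs_neg, abs_of_pos] <;> linarith)
  dsimp only at *
  refine ⟨?_, ?_, ?_, ?_⟩ <;> linarith

/-- With `N` grid squares and `m = ⌊√N⌋`, the rise is `M = 11δm`, and `N δ² ≤ 2 |K|` gives
`M² ≤ 242 |K| ≤ (16 √|K|)²`. The two orders on the corners are the vertical and the horizontal
cone order, with a margin `δ` that makes them strict and transverse. -/
lemma exists_stretchData {τ : ℝ} (hτ : 0 < τ) {K : Set (ℝ × ℝ)} (hK : IsCompact K)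
    (hKsq : K ⊆ Ioo (0 : ℝ) 1 ×ˢ Ioo (0 : ℝ) 1) (hpos : 0 < (volume K).toReal)
    (hc1 : (volume K).toReal ≤ 1 / 16384) (hc2 : √(volume K).toReal * τ ≤ 1 / 16384) :
    ∃ M g u, StretchData (4 * τ) M g u ∧ M ≤ 1 / 8 ∧ M ≤ 16 * √(volume K).toReal ∧
      ∀ p ∈ K, fderiv ℝ g p (1, 0) = 1 ∨ fderiv ℝ u p (0, 1) = 1 := by
  classical
  obtain ⟨η, hη, hη8, hmar⟩ := exists_margin hK hKsq
  obtain ⟨δ, hδ, hδη, S, hScard, hScov⟩ := exists_grid_cover hK hKsq hpos hη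
  set k := (volume K).toReal with hk
  set m := Nat.sqrt S.card with hm
  set M : ℝ := 11 * δ * m with hM
  have hM0 : 0 ≤ M := by positivity
  have hMk : M ≤ 16 * √k := by
    have h1 : (m : ℝ) ^ 2 ≤ S.card := by exact_mod_cast Nat.sqrt_le' S.card
    have h2 : M ^ 2 ≤ (16 * √k) ^ 2 := by
      rw [mul_pow 16, Real.sq_sqrt hpos.le]
      have h3 : (m : ℝ) ^ 2 * δ ^ 2 ≤ S.card * δ ^ 2 := by gcongr
      rw [hM]
      nlinarith
    exact (pow_le_pow_iff_left₀ hM0 (by positivity) two_ne_zero).1 h2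
  have hM8 : M ≤ 1 / 8 := by
    have h1 : √k ≤ 1 / 128 := by
      rw [Real.sqrt_le_left (by norm_num)]
      norm_num
      linarith
    linarith
  obtain ⟨A, B, hAB, ⟨hA, hA1, hA2⟩, hB, hB1, hB2⟩ := exists_split
    (fun a b : ℝ × ℝ => |b.1 - a.1| + δ ≤ b.2 - a.2)
    (fun a b : ℝ × ℝ => |b.2 - a.2| + δ ≤ b.1 - a.1)
    (by
      intro a b c h1 h2
      have := abs_sub_le c.1 b.1 a.1
      linarith)
    (by
      intro a h
      simp only [sub_self, abs_zero] at h
      linarith)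
    (by
      intro a b c h1 h2
      have := abs_sub_le c.2 b.2 a.2
      linarith)
    (by
      intro a h
      simp only [sub_self, abs_zero] at h
      linarith)
    (by
      intro a b h
      have h1 := le_abs_self (b.1 - a.1)
      have h2 := le_abs_self (b.2 - a.2)
      have h3 := neg_abs_le (b.1 - a.1)
      have h4 := neg_abs_le (a.2 - b.2)
      constructor <;> intro h' <;> linarith)
    m S (Nat.sqrt_lt.1 (Nat.lt_succ_self _))
  obtain ⟨u, hu, hucone, hu0, hu1, huK⟩ :=
    exists_smooth_profile A hδ hδη m hA hA1 hA2 (by linarith)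
  obtain ⟨v, hv, hvcone, hv0, hv1, hvK⟩ :=
    exists_smooth_profile (B.image Prod.swap) hδ hδη m (fun s => hB s.swap)
      (by
        intro s hs
        obtain ⟨b, hb, rfl⟩ := Finset.mem_image.1 hs
        simpa using hB1 b hb)
      (by
        intro s hs t ht h
        obtain ⟨b, hb, rfl⟩ := Finset.mem_image.1 hs
        obtain ⟨c, hc, rfl⟩ := Finset.mem_image.1 ht
        simpa using hB2 b hb c hc h) (by linarith)
  refine ⟨M, fun p => v p.swap, u, ?_, hM8, hMk, ?_⟩
  · exact {
      pos := by positivity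
      nonneg := hM0
      small := by nlinarith
      le_one := by linarith
      smooth_g := hv.comp (contDiff_snd.prodMk contDiff_fst)
      smooth_u := hu
      cone_g := hvcone
      cone_u := hucone
      g_left := fun p hp => hv0 p.swap hp
      g_right := fun p hp => hv1 p.swap hp
      u_bot := hu0
      u_top := hu1 }
  · intro p hp
    obtain ⟨s, hs, a1, a2, a3, a4⟩ := hScov p hp
    obtain ⟨b1, b2, b3, b4⟩ := hmar p hp
    rcases Finset.mem_union.1 (hAB hs) with h | h
    · exact Or.inr (huK p b3 b4 ⟨s, h, a1, a2, a3, a4⟩)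
    · left
      rw [StretchData.fderiv_swap hv]
      exact hvK p.swap b1 b2 ⟨s.swap, Finset.mem_image_of_mem _ h, a3, a4, a1, a2⟩

/-! ### Estimates and conclusion -/

lemma hasDerivWithinAt_slice {φ : ℝ × ℝ → ℝ × ℝ} {p : ℝ × ℝ} (hφ : DifferentiableAt ℝ φ p) :
    HasDerivWithinAt (fun t => (φ (t, p.2)).1) (fderiv ℝ φ p (1, 0)).1 (Icc 0 1) p.1 ∧
      HasDerivWithinAt (fun t => (φ (p.1, t)).2) (fderiv ℝ φ p (0, 1)).2 (Icc 0 1) p.2 := by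
  constructor
  · have h1 : HasDerivAt (fun t : ℝ => (t, p.2)) ((1 : ℝ), (0 : ℝ)) p.1 :=
      (hasDerivAt_id _).prodMk (hasDerivAt_const _ _)
    have h2 := (HasFDerivAt.comp_hasDerivAt p.1 (f := fun t : ℝ => (t, p.2)) hφ.hasFDerivAt h1)
    exact (hasFDerivAt_fst.comp_hasDerivAt p.1 h2).hasDerivWithinAt
  · have h1 : HasDerivAt (fun t : ℝ => (p.1, t)) ((0 : ℝ), (1 : ℝ)) p.2 :=
      (hasDerivAt_const _ _).prodMk (hasDerivAt_id _)
    have h2 := (HasFDerivAt.comp_hasDerivAt p.2 (f := fun t : ℝ => (p.1, t)) hφ.hasFDerivAt h1)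
    exact (hasFDerivAt_snd.comp_hasDerivAt p.2 h2).hasDerivWithinAt

lemma volume_unitSq : volume unitSq = 1 := by
  rw [unitSq, Measure.volume_eq_prod, Measure.prod_prod, Real.volume_Icc]
  simp

lemma measurableSet_unitSq : MeasurableSet unitSq := measurableSet_Icc.prod measurableSet_Icc

lemma StretchData.sobolev {σ M : ℝ} {g u : ℝ × ℝ → ℝ} (H : StretchData σ M g u) {p : ℝ≥0∞}
    (hp : 1 ≤ p) :
    eLpNorm (fun x => stretch σ M g u x - x) p (volume.restrict unitSq) +
      eLpNorm (fun x => fderiv ℝ (stretch σ M g u) x - ContinuousLinearMap.id ℝ (ℝ × ℝ)) p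
        (volume.restrict unitSq) ≤ ENNReal.ofReal (7 * σ * M ^ (1 / p.toReal)) := by
  have hσ := H.pos
  have hM := H.nonneg
  have hg' := H.smooth_g.continuous_fderiv one_ne_zero
  have hu' := H.smooth_u.continuous_fderiv one_ne_zero
  have : IsFiniteMeasure (volume.restrict unitSq) := ⟨by simp [volume_unitSq]⟩
  have hreal : (volume.restrict unitSq).real univ = 1 := by
    simp [Measure.real, volume_unitSq]
  have h1 : eLpNorm (fun x => stretch σ M g u x - x) p (volume.restrict unitSq) ≤
      ENNReal.ofReal (σ * M ^ (1 / p.toReal)) := by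
    refine eLpNorm_le_of_norm_le_mul (G := fun _ => M) hσ.le hM (by simp [hM]) (by simp [H.le_one])
      (integrable_const M) ?_ ?_ hp
    · rw [integral_const, hreal, one_smul]
    · filter_upwards [ae_restrict_mem measurableSet_unitSq] with x hx
      exact H.norm_sub_le hx
  have hGint : IntegrableOn (fun p => fderiv ℝ g p (1, 0) + fderiv ℝ u p (0, 1)) unitSq := by
    refine ContinuousOn.integrableOn_compact (isCompact_Icc.prod isCompact_Icc) ?_
    exact Continuous.continuousOn (by fun_prop)
  have h2 : eLpNorm (fun x => fderiv ℝ (stretch σ M g u) x - ContinuousLinearMap.id ℝ (ℝ × ℝ)) p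
      (volume.restrict unitSq) ≤ ENNReal.ofReal (6 * σ * M ^ (1 / p.toReal)) := by
    refine eLpNorm_le_of_norm_le_mul
      (G := fun p => (fderiv ℝ g p (1, 0) + fderiv ℝ u p (0, 1) + M) / 3) (by positivity) hM
      (Filter.Eventually.of_forall fun x => ?_) (Filter.Eventually.of_forall fun x => ?_)
      ((hGint.add (integrable_const M)).div_const 3) ?_
      (Filter.Eventually.of_forall fun x => H.norm_fderiv_sub_le x) hp
    · have h1 := (abs_nonneg _).trans (H.bounds_g x).1
      have h2 := (abs_nonneg _).trans (H.bounds_u x).1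
      positivity
    · have h1 := (H.bounds_g x).2
      have h2 := (H.bounds_u x).2
      have h3 := H.le_one
      linarith
    · rw [integral_div, integral_add hGint (integrable_const M), H.integral_eq, integral_const,
        hreal, one_smul]
      linarith
  refine (add_le_add h1 h2).trans ?_
  rw [← ENNReal.ofReal_add (by positivity) (by positivity)]
  refine ENNReal.ofReal_le_ofReal (le_of_eq ?_)
  ring

lemma rpow_bound {M k : ℝ} (hM : 0 ≤ M) (hk : 0 ≤ k) (h : M ≤ 16 * √k) {p : ℝ≥0∞} (hp : 1 ≤ p) :
    M ^ (1 / p.toReal) ≤ 16 * k ^ (1 / (2 * p.toReal)) := by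
  have he0 : 0 ≤ 1 / p.toReal := by positivity
  have he1 : 1 / p.toReal ≤ 1 := by
    by_cases hpt : p = ⊤
    · simp [hpt]
    · have : 1 ≤ p.toReal := by simpa using ENNReal.toReal_mono hpt hp
      exact div_le_one_of_le₀ this (by linarith)
  calc M ^ (1 / p.toReal) ≤ (16 * √k) ^ (1 / p.toReal) := by gcongr
    _ = 16 ^ (1 / p.toReal) * k ^ (1 / (2 * p.toReal)) := by
        rw [Real.mul_rpow (by norm_num) (by positivity), Real.sqrt_eq_rpow, ← Real.rpow_mul hk]
        congr 2
        rw [one_div_mul_one_div]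
    _ ≤ 16 * k ^ (1 / (2 * p.toReal)) := by
        gcongr
        calc (16 : ℝ) ^ (1 / p.toReal) ≤ 16 ^ (1 : ℝ) := by gcongr; norm_num
          _ = 16 := Real.rpow_one _

lemma eLpNorm_eq_zero_of_forall {E : Type*} [NormedAddCommGroup E] {f : ℝ × ℝ → E} {p : ℝ≥0∞}
    {μ : Measure (ℝ × ℝ)} (h : ∀ x, f x = 0) : eLpNorm f p μ = 0 := by
  rw [show f = fun _ => 0 from funext h, eLpNorm_zero']

/-- **Bi-Lipschitz stretching of a compact set in the unit square.**  There are universal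
constants `C, c > 0` such that for every `τ > 0` and every compact `K ⊆ (0,1)²` with
`max {|K|, √|K|·τ} ≤ c` there is a bi-Lipschitz `φ = (φ₁, φ₂) : [0,1]² → [0,1]²` satisfying
the `W^{1,p}` and `L^∞` estimates, `|∇φ| ≤ C det ∇φ` a.e., `det ∇φ ≥ 1 + τ` a.e. on `K`,
`det ∇φ ≥ 1 - C√|K| τ` a.e. on `[0,1]²`, preserving the boundary globally
(`φ₁(0,s) = φ₂(s,0) = 0`, `φ₁(1,s) = φ₂(s,1) = 1`), with
`∂ₓφ₁ ≥ 1 - C|K|^{1/2}τ` on `[0,1] × {0,1}` and `∂_yφ₂ ≥ 1 - C|K|^{1/2}τ` on `{0,1} × [0,1]`. -/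
theorem stretching_unit_square :
    ∃ C > (0 : ℝ), ∃ c > (0 : ℝ), ∀ τ : ℝ, 0 < τ →
      ∀ K : Set (ℝ × ℝ), IsCompact K → K ⊆ Set.Ioo (0:ℝ) 1 ×ˢ Set.Ioo (0:ℝ) 1 →
        (volume K).toReal ≤ c → Real.sqrt (volume K).toReal * τ ≤ c →
        ∃ φ ψ : ℝ × ℝ → ℝ × ℝ,
          BiLipschitzOn φ ψ unitSq ∧
          (∀ p : ℝ≥0∞, 1 ≤ p →
            eLpNorm (fun x => φ x - x) p (volume.restrict unitSq) +
              eLpNorm (fun x => fderiv ℝ φ x - ContinuousLinearMap.id ℝ (ℝ × ℝ)) p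
                (volume.restrict unitSq) ≤
              ENNReal.ofReal (C * (volume K).toReal ^ (1 / (2 * p.toReal)) * τ)) ∧
          (eLpNorm (fun x => φ x - x) ⊤ (volume.restrict unitSq) ≤
            ENNReal.ofReal (C * Real.sqrt (volume K).toReal * τ)) ∧
          (∀ᵐ x ∂(volume.restrict unitSq), ‖fderiv ℝ φ x‖ ≤ C * (fderiv ℝ φ x).det) ∧
          (∀ᵐ x ∂(volume.restrict K), 1 + τ ≤ (fderiv ℝ φ x).det) ∧
          (∀ᵐ x ∂(volume.restrict unitSq),
            1 - C * Real.sqrt (volume K).toReal * τ ≤ (fderiv ℝ φ x).det) ∧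
          (∀ s ∈ Set.Icc (0:ℝ) 1,
            (φ (0, s)).1 = 0 ∧ (φ (s, 0)).2 = 0 ∧ (φ (1, s)).1 = 1 ∧ (φ (s, 1)).2 = 1) ∧
          (∀ x ∈ Set.Icc (0:ℝ) 1, ∀ y : ℝ, (y = 0 ∨ y = 1) →
            ∃ d : ℝ, HasDerivWithinAt (fun t => (φ (t, y)).1) d (Set.Icc 0 1) x ∧
              1 - C * Real.sqrt (volume K).toReal * τ ≤ d) ∧
          (∀ y ∈ Set.Icc (0:ℝ) 1, ∀ x : ℝ, (x = 0 ∨ x = 1) →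
            ∃ d : ℝ, HasDerivWithinAt (fun t => (φ (x, t)).2) d (Set.Icc 0 1) y ∧
              1 - C * Real.sqrt (volume K).toReal * τ ≤ d) := by
  -- `448 = 7 · 4 · 16`, from the Sobolev constant `7 σ`, with `σ = 4 τ` and `M ≤ 16 √|K|`;
  -- `16384 = 128²` ensures `M ≤ 1/8` and `σ M ≤ 1/2`
  refine ⟨448, by norm_num, 1 / 16384, by norm_num, fun τ hτ K hK hKsq hc1 hc2 => ?_⟩
  set k := (volume K).toReal with hk
  have hk0 : 0 ≤ k := ENNReal.toReal_nonneg
  rcases hk0.eq_or_lt with hkz | hpos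
  · -- a null set needs no stretching
    have hnull : volume K = 0 :=
      ((ENNReal.toReal_eq_zero_iff _).1 hkz.symm).resolve_right hK.measure_lt_top.ne
    have hfd : ∀ x : ℝ × ℝ, fderiv ℝ (id : ℝ × ℝ → ℝ × ℝ) x = ContinuousLinearMap.id ℝ (ℝ × ℝ) :=
      fun x => fderiv_id
    have hdet : (ContinuousLinearMap.id ℝ (ℝ × ℝ)).det = 1 := by simp [clm_det_eq]
    have hle : 1 - 448 * √k * τ ≤ 1 := by
      have : 0 ≤ 448 * √k * τ := by positivity
      linarith
    refine ⟨id, id, ⟨bijOn_id _, ⟨fun _ _ => rfl, fun _ _ => rfl⟩,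
      ⟨1, LipschitzWith.id.lipschitzOnWith⟩, ⟨1, LipschitzWith.id.lipschitzOnWith⟩⟩,
      ?_, ?_, ?_, ?_, ?_, ?_, ?_, ?_⟩
    · intro p hp
      rw [eLpNorm_eq_zero_of_forall fun x => by rw [id_eq, sub_self],
        eLpNorm_eq_zero_of_forall fun x => by rw [hfd, sub_self], add_zero]
      exact zero_le
    · simp only [id_eq, sub_self, eLpNorm_zero', zero_le]
    · refine Filter.Eventually.of_forall fun x => ?_
      rw [hfd, hdet, ContinuousLinearMap.norm_id]
      norm_num
    · rw [Measure.restrict_eq_zero.2 hnull]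
      simp
    · refine Filter.Eventually.of_forall fun x => ?_
      rwa [hfd, hdet]
    · simp
    · intro x _ y _
      exact ⟨1, hasDerivWithinAt_id _ _, hle⟩
    · intro x _ y _
      exact ⟨1, hasDerivWithinAt_id _ _, hle⟩
  · obtain ⟨M, g, u, H, hM8, hMk, hKd⟩ := exists_stretchData hτ hK hKsq hpos hc1 hc2
    rw [← hk] at hMk
    obtain ⟨ψ, hψ⟩ := H.biLipschitzOn
    have hM0 := H.nonneg
    have hsmall := H.small
    have hτM : τ * M ≤ 16 * √k * τ := by nlinarith
    have hkτ : 0 ≤ √k * τ := by positivity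
    have hgx : ∀ x, 0 ≤ fderiv ℝ g x (1, 0) := fun x => (abs_nonneg _).trans (H.bounds_g x).1
    have huy : ∀ x, 0 ≤ fderiv ℝ u x (0, 1) := fun x => (abs_nonneg _).trans (H.bounds_u x).1
    have hdiff := H.contDiff.differentiable one_ne_zero
    have ha : 0 ≤ 1 - 4 * τ * M := by linarith
    refine ⟨stretch (4 * τ) M g u, ψ, hψ, ?_, ?_, ?_, ?_, ?_, ?_, ?_, ?_⟩
    · intro p hp
      refine (H.sobolev hp).trans (ENNReal.ofReal_le_ofReal ?_)
      have := rpow_bound hM0 hk0 hMk hp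
      nlinarith
    · rw [eLpNorm_exponent_top]
      refine eLpNormEssSup_le_of_ae_bound ?_
      filter_upwards [ae_restrict_mem measurableSet_unitSq] with x hx
      refine (H.norm_sub_le hx).trans ?_
      nlinarith
    · refine Filter.Eventually.of_forall fun x => (H.norm_fderiv_le x).trans ?_
      have := H.det_pos x
      linarith
    · filter_upwards [ae_restrict_mem hK.measurableSet] with x hx
      refine le_trans ?_ (H.det_ge x)
      have h1 : 1 ≤ fderiv ℝ g x (1, 0) + fderiv ℝ u x (0, 1) := by
        rcases hKd x hx with h | h
        · linarith [huy x]
        · linarith [hgx x]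
      have h2 : (1 - 4 * τ * M) * (4 * τ * 1) ≤ (1 - 4 * τ * M) *
          (4 * τ * (fderiv ℝ g x (1, 0) + fderiv ℝ u x (0, 1))) := by
        gcongr
      have h3 : τ * M ≤ τ * (1 / 8) := by gcongr
      nlinarith
    · refine Filter.Eventually.of_forall fun x => le_trans ?_ (H.det_ge x)
      have h1 : 0 ≤ (1 - 4 * τ * M) *
          (4 * τ * (fderiv ℝ g x (1, 0) + fderiv ℝ u x (0, 1))) := by
        have := hgx x
        have := huy x
        positivity
      nlinarith [sq_nonneg (4 * τ * M)]
    · intro s _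
      simp only [stretch, H.g_left (0, s) le_rfl, H.g_right (1, s) le_rfl, H.u_bot (s, 0) le_rfl,
        H.u_top (s, 1) le_rfl]
      refine ⟨?_, ?_, ?_, ?_⟩ <;> ring
    · intro x _ y _
      refine ⟨_, (hasDerivWithinAt_slice (hdiff (x, y))).1, ?_⟩
      rw [H.fderiv_apply]
      have := mul_nonneg hτ.le (hgx (x, y))
      dsimp only
      linarith
    · intro y _ x _
      refine ⟨_, (hasDerivWithinAt_slice (hdiff (x, y))).2, ?_⟩
      rw [H.fderiv_apply]
      have := mul_nonneg hτ.le (huy (x, y))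
      dsimp only
      linarith
end

section
/- Let S ⊂ ℝ² be a finite set of points. Then there exist N functions f_i : ℝ → ℝ and M functions g_j : ℝ → ℝ such that: (i) N ≤ √(#S) and M ≤ √(#S); (ii) each f_i and each g_j is Lipschitz continuous with Lipschitz constant at most 1; (iii) S is contained in the union of the graphs of the f_i (considered as functions of x) and the graphs of the g_j (considered as functions of y), i.e. S ⊂ ⋃_{1≤i≤N} {(x, f_i(x)) : x ∈ ℝ} ∪ ⋃_{1≤j≤M} {(g_j(y), y) : y ∈ ℝ}. -/
open Set

/-!
Order the plane by `p ≼ q` iff `|q.2 - p.2| ≤ q.1 - p.1`. Chains are exactly the sets with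
`|Δy| ≤ |Δx|` for all pairs, hence lie on a `1`-Lipschitz graph over the `x`-axis
(`exists_lipschitz_graph`, by extending a Lipschitz function from a subset of the line).
Antichains have `|Δx| < |Δy|` for distinct points, hence lie on a `1`-Lipschitz graph over the
`y`-axis.

Let `k = ⌊√#S⌋`, so `#S < (k + 1)²`. Chains with `k + 1` points are removed greedily; at most `k`
of them can be removed. What is left contains no chain of `k + 1` points, so by Mirsky's argument
(`exists_height`) it is a union of `k` antichains, the level sets of the function sending `p` to
the size of a longest chain below `p`. The induction is `exists_cover`.
-/

/-- A chain of the cone order `p ≼ q ↔ |q.2 - p.2| ≤ q.1 - p.1`, expressed symmetrically. -/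
def IsFlat (C : Set (ℝ × ℝ)) : Prop :=
  ∀ p ∈ C, ∀ q ∈ C, |p.2 - q.2| ≤ |p.1 - q.1|

theorem exists_lipschitz_graph {C : Set (ℝ × ℝ)} (hC : IsFlat C) :
    ∃ f : ℝ → ℝ, LipschitzWith 1 f ∧ ∀ p ∈ C, p.2 = f p.1 := by
  have hsel : ∀ x : ℝ, ∃ y : ℝ, x ∈ Prod.fst '' C → (x, y) ∈ C := by
    intro x
    by_cases hx : x ∈ Prod.fst '' C
    · obtain ⟨p, hp, rfl⟩ := hx
      exact ⟨p.2, fun _ => hp⟩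
    · exact ⟨0, fun h => absurd h hx⟩
  choose φ hφ using hsel
  have hlip : LipschitzOnWith 1 φ (Prod.fst '' C) := by
    refine LipschitzOnWith.of_dist_le_mul fun x hx y hy => ?_
    simpa [Real.dist_eq] using hC _ (hφ x hx) _ (hφ y hy)
  obtain ⟨f, hf, hfφ⟩ := hlip.extend_real
  refine ⟨f, hf, fun p hp => ?_⟩
  have hmem : p.1 ∈ Prod.fst '' C := ⟨p, hp, rfl⟩
  have h := hC p hp _ (hφ p.1 hmem)
  rw [← hfφ hmem]
  simpa [sub_eq_zero] using h

/-- Mirsky's theorem for the cone order: without chains of `k + 1` points, the size of a longest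
chain below a point takes values in `1, …, k` and its level sets are antichains. -/
theorem exists_height (k : ℕ) (T : Finset (ℝ × ℝ))
    (hT : ∀ C ⊆ T, IsFlat (C : Set (ℝ × ℝ)) → C.card ≤ k) :
    ∃ L : ℝ × ℝ → ℕ, (∀ p ∈ T, 1 ≤ L p ∧ L p ≤ k) ∧
      ∀ p ∈ T, ∀ q ∈ T, L p = L q → |p.1 - q.1| ≤ |p.2 - q.2| := by
  classical
  let F : ℝ × ℝ → Finset (Finset (ℝ × ℝ)) := fun p =>
    T.powerset.filter fun C => IsFlat (C : Set (ℝ × ℝ)) ∧ ∀ c ∈ C, |p.2 - c.2| ≤ p.1 - c.1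
  have hF : ∀ p C, C ∈ F p ↔ C ⊆ T ∧ IsFlat (C : Set (ℝ × ℝ)) ∧
      ∀ c ∈ C, |p.2 - c.2| ≤ p.1 - c.1 := by
    intro p C
    simp [F]
  have hsing : ∀ p ∈ T, {p} ∈ F p := by
    intro p hp
    simp [hF, hp, IsFlat]
  let L : ℝ × ℝ → ℕ := fun p => (F p).sup Finset.card
  have hle : ∀ p C, C ∈ F p → C.card ≤ L p := fun p C h => Finset.le_sup (f := Finset.card) h
  -- A longest chain below `p` is prolonged by any `q` strictly above `p`.
  have hlt : ∀ p ∈ T, ∀ q ∈ T, p.1 < q.1 → |p.2 - q.2| < |p.1 - q.1| → L p < L q := by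
    intro p hp q hq h1 h2
    obtain ⟨C, hC, hCL⟩ := Finset.exists_mem_eq_sup (F p) ⟨_, hsing p hp⟩ Finset.card
    obtain ⟨hCT, hCf, hCp⟩ := (hF p C).1 hC
    rw [abs_sub_comm p.1, abs_of_pos (sub_pos.2 h1), abs_sub_comm] at h2
    have hCq : ∀ c ∈ C, |q.2 - c.2| ≤ q.1 - c.1 := by
      intro c hc
      have := abs_sub_le q.2 p.2 c.2
      linarith [hCp c hc]
    have hqC : q ∉ C := by
      intro h
      have := (abs_nonneg _).trans (hCp q h)
      linarith
    have hins : insert q C ∈ F q := by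
      refine (hF _ _).2 ⟨Finset.insert_subset hq hCT, ?_, ?_⟩
      · intro a ha b hb
        rw [Finset.mem_coe, Finset.mem_insert] at ha hb
        rcases ha with rfl | ha <;> rcases hb with rfl | hb
        · simp
        · exact (hCq b hb).trans (le_abs_self _)
        · rw [abs_sub_comm, abs_sub_comm a.1]
          exact (hCq a ha).trans (le_abs_self _)
        · exact hCf a ha b hb
      · intro c hc
        rcases Finset.mem_insert.1 hc with rfl | hc
        · simp
        · exact hCq c hc
    have := hle _ _ hins
    rw [Finset.card_insert_of_notMem hqC] at this
    change (F p).sup Finset.card < L q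
    omega
  refine ⟨L, fun p hp => ⟨?_, ?_⟩, ?_⟩
  · simpa using hle p _ (hsing p hp)
  · exact Finset.sup_le fun C hC => hT C ((hF p C).1 hC).1 ((hF p C).1 hC).2.1
  · intro p hp q hq hpq
    by_contra! h
    rcases lt_trichotomy p.1 q.1 with h1 | h1 | h1
    · exact (hlt p hp q hq h1 h).ne hpq
    · rw [h1, sub_self, abs_zero] at h
      exact absurd h (abs_nonneg _).not_gt
    · rw [abs_sub_comm, abs_sub_comm p.1] at h
      exact (hlt q hq p hp h1 h).ne hpq.symm

theorem exists_antichain_graphs (k : ℕ) (T : Finset (ℝ × ℝ))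
    (hT : ∀ C ⊆ T, IsFlat (C : Set (ℝ × ℝ)) → C.card ≤ k) :
    ∃ g : Fin k → ℝ → ℝ, (∀ j, LipschitzWith 1 (g j)) ∧ ∀ p ∈ T, ∃ j, p.1 = g j p.2 := by
  obtain ⟨L, hL, hanti⟩ := exists_height k T hT
  have hgr : ∀ j : Fin k, ∃ g : ℝ → ℝ, LipschitzWith 1 g ∧
      ∀ p ∈ T, L p = j + 1 → p.1 = g p.2 := by
    intro j
    -- Swapping coordinates turns the antichain `L = j + 1` into a flat set.
    obtain ⟨g, hg, hgC⟩ := exists_lipschitz_graph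
      (C := {p : ℝ × ℝ | p.swap ∈ T ∧ L p.swap = j + 1})
      (fun p hp q hq => hanti _ hp.1 _ hq.1 (hp.2.trans hq.2.symm))
    exact ⟨g, hg, fun p hp hpj => hgC p.swap ⟨by simpa using hp, by simpa using hpj⟩⟩
  choose g hg hgT using hgr
  refine ⟨g, hg, fun p hp => ?_⟩
  obtain ⟨h1, h2⟩ := hL p hp
  exact ⟨⟨L p - 1, by omega⟩, hgT _ p hp (by simp only; omega)⟩

/-- Greedy removal of chains of `k + 1` points: at most `m` removals are possible when
`#T < (m + 1) (k + 1)`, and the remainder splits into `k` antichains. -/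
theorem exists_cover (k m : ℕ) (T : Finset (ℝ × ℝ)) (hcard : T.card < (m + 1) * (k + 1)) :
    ∃ (f : Fin m → ℝ → ℝ) (g : Fin k → ℝ → ℝ),
      (∀ i, LipschitzWith 1 (f i)) ∧ (∀ j, LipschitzWith 1 (g j)) ∧
      ∀ p ∈ T, (∃ i, p.2 = f i p.1) ∨ ∃ j, p.1 = g j p.2 := by
  classical
  induction m generalizing T with
  | zero =>
    -- There is no room for a chain of `k + 1` points.
    obtain ⟨g, hg, hgT⟩ := exists_antichain_graphs k T fun C hCT _ => by
      have := Finset.card_le_card hCT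
      omega
    exact ⟨fun _ _ => 0, g, fun i => i.elim0, hg, fun p hp => Or.inr (hgT p hp)⟩
  | succ m ih =>
    by_cases h : ∀ C ⊆ T, IsFlat (C : Set (ℝ × ℝ)) → C.card ≤ k
    · obtain ⟨g, hg, hgT⟩ := exists_antichain_graphs k T h
      exact ⟨fun _ _ => 0, g, fun i => LipschitzWith.const' 0, hg,
        fun p hp => Or.inr (hgT p hp)⟩
    · push Not at h
      obtain ⟨C, hCT, hC, hk⟩ := h
      obtain ⟨f₀, hf₀, hf₀C⟩ := exists_lipschitz_graph hC
      obtain ⟨f, g, hf, hg, hcov⟩ := ih (T \ C) (by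
        rw [Finset.card_sdiff_of_subset hCT]
        have : (m + 1 + 1) * (k + 1) = (m + 1) * (k + 1) + (k + 1) := by ring
        have : 0 < (m + 1) * (k + 1) := by positivity
        omega)
      refine ⟨Fin.cons f₀ f, g, fun i => ?_, hg, fun p hp => ?_⟩
      · refine Fin.cases ?_ (fun i => ?_) i
        · simpa using hf₀
        · simpa using hf i
      · by_cases hpC : p ∈ C
        · exact Or.inl ⟨0, by simpa using hf₀C p hpC⟩
        · rcases hcov p (Finset.mem_sdiff.2 ⟨hp, hpC⟩) with ⟨i, hi⟩ | hj
          · exact Or.inl ⟨i.succ, by simpa using hi⟩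
          · exact Or.inr hj

/-- **Erdős–Szekeres covering of a finite planar set by Lipschitz graphs**
(Alberti–Csörnyei–Preiss).  A finite set `S ⊆ ℝ²` can be covered by at most `√#S` graphs of
`1`-Lipschitz functions of `x` together with at most `√#S` graphs of `1`-Lipschitz functions
of `y`. -/
theorem finite_set_covered_by_lipschitz_graphs (S : Finset (ℝ × ℝ)) :
    ∃ (N M : ℕ) (f : Fin N → ℝ → ℝ) (g : Fin M → ℝ → ℝ),
      (N : ℝ) ≤ Real.sqrt (S.card : ℝ) ∧ (M : ℝ) ≤ Real.sqrt (S.card : ℝ) ∧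
      (∀ i, LipschitzWith 1 (f i)) ∧ (∀ j, LipschitzWith 1 (g j)) ∧
      ∀ p ∈ S, (∃ i, p.2 = f i p.1) ∨ ∃ j, p.1 = g j p.2 := by
  have hlt : S.card < (S.card.sqrt + 1) * (S.card.sqrt + 1) := Nat.sqrt_lt.1 (Nat.lt_succ_self _)
  obtain ⟨f, g, hf, hg, hcov⟩ := exists_cover S.card.sqrt S.card.sqrt S hlt
  exact ⟨_, _, f, g, Real.nat_sqrt_le_real_sqrt, Real.nat_sqrt_le_real_sqrt, hf, hg, hcov⟩
end

section
/- Let K ⊂ [0,1]² be a compact set and let ε > 0. For any sufficiently small δ > 0 (depending on ε and K), there exist N functions f_i : [0,1] → [0,1] and M functions g_j : [0,1] → [0,1] such that: (i) δN ≤ √|K| + ε and δM ≤ √|K| + ε; (ii) each f_i and each g_j is Lipschitz continuous with Lipschitz constant at most 1; (iii) setting H_i := {(x,y) : x ∈ [0,1], |y − f_i(x)| ≤ δ} and V_j := {(x,y) : y ∈ [0,1], |x − g_j(y)| ≤ δ}, the set K is covered by these strips: K ⊂ ⋃_{i=1}^N H_i ∪ ⋃_{j=1}^M V_j. -/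
/-!
Rotating the plane by `(x, y) ↦ (x + y, x - y)` turns the condition `|Δy| ≤ |Δx|` into comparability
for the product order on `ℝ × ℝ`. Hence a chain in rotated coordinates lies on the graph of a
`1`-Lipschitz function of `x`, and an antichain on the graph of a `1`-Lipschitz function of `y`.

A finite poset with fewer than `(c + 1) * (k + 1)` elements is a union of `c` chains and `k`
antichains (`exists_chains_antichains`): chains of `k + 1` elements are removed as long as there are
any, which happens at most `c` times, and what remains is a union of `k` antichains by Mirsky's
theorem (`exists_antichain_cover`). With `n` elements one can take `c = k = ⌊√n⌋`.

This is applied to the centres of the `n` cells of side `δ` of the grid `δℤ²` that meet `K`. The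
`1`-Lipschitz graph through the centre of a cell passes within vertical (or horizontal) distance `δ`
of every point of the cell, so the strips cover `K`. These cells are disjoint and contained in the
closed `δ`-neighbourhood of `K`, so `n δ²` is at most the measure of that neighbourhood
(`card_cells_mul_sq_le`), which tends to `|K|` as `δ → 0` because `K` is compact. Therefore
`δ ⌊√n⌋ ≤ √(|K| + ε²) ≤ √|K| + ε` for small `δ`.
-/

open MeasureTheory Set

/-- Mirsky's theorem: a finite set whose chains have at most `k` elements is covered by
`k` antichains. The induction on `k` splits off the antichain of maximal elements. -/
lemma exists_antichain_cover {α : Type*} [PartialOrder α] (k : ℕ) :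
    ∀ S : Finset α, (∀ C ⊆ S, IsChain (· ≤ ·) (C : Set α) → C.card ≤ k) →
      ∃ A : Fin k → Set α, (∀ i, IsAntichain (· ≤ ·) (A i)) ∧ ∀ x ∈ S, ∃ i, x ∈ A i := by
  classical
  induction k with
  | zero =>
    intro S h
    refine ⟨fun _ => ∅, fun i => i.elim0, fun x hx => ?_⟩
    have := h {x} (by simpa using hx) (by simp)
    simp at this
  | succ k ih =>
    intro S h
    obtain ⟨A, hA, hcov⟩ := ih (S.filter fun x => ¬ Maximal (· ∈ S) x) (by
      intro C hC hchain
      rcases C.eq_empty_or_nonempty with rfl | hne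
      · simp
      obtain ⟨m, hm⟩ := C.exists_maximal hne
      have hmS := Finset.mem_filter.1 (hC hm.prop)
      -- The top `m` of the chain `C` is not maximal in `S`, so `C` extends to a longer chain.
      obtain ⟨z, hzS, hmz⟩ : ∃ z ∈ S, m < z := by
        by_contra! hcon
        refine hmS.2 ⟨hmS.1, fun y hy hmy => ?_⟩
        rcases hmy.eq_or_lt with h | h
        · exact h.ge
        · exact absurd h (hcon y hy)
      have hle : ∀ c ∈ C, c ≤ m := by
        intro c hc
        rcases hchain.total (Finset.mem_coe.2 hc) (Finset.mem_coe.2 hm.prop) with h | h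
        · exact h
        · exact hm.le_of_ge hc h
      have hzC : z ∉ C := fun hz => absurd (hle z hz) (not_le_of_gt hmz)
      have := h (insert z C) (by
          intro c hc
          rcases Finset.mem_insert.1 hc with rfl | hc
          · exact hzS
          · exact (Finset.mem_filter.1 (hC hc)).1) (by
          rw [Finset.coe_insert]
          exact hchain.insert fun b hb _ => Or.inr ((hle b hb).trans hmz.le))
      rw [Finset.card_insert_of_notMem hzC] at this
      omega)
    refine ⟨Fin.cons {x | Maximal (· ∈ S) x} A, ?_, ?_⟩
    · intro i
      refine Fin.cases ?_ (fun i => ?_) i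
      · intro a ha b hb hab hle
        exact hab (ha.eq_of_le (Maximal.prop hb) hle)
      · simpa using hA i
    · intro x hx
      by_cases hmax : Maximal (· ∈ S) x
      · exact ⟨0, by simpa using hmax⟩
      · obtain ⟨i, hi⟩ := hcov x (Finset.mem_filter.2 ⟨hx, hmax⟩)
        exact ⟨i.succ, by simpa using hi⟩

lemma exists_chains_antichains {α : Type*} [PartialOrder α] (k c : ℕ) :
    ∀ S : Finset α, S.card < (c + 1) * (k + 1) →
      ∃ (B : Fin c → Set α) (A : Fin k → Set α), (∀ i, IsChain (· ≤ ·) (B i)) ∧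
        (∀ i, IsAntichain (· ≤ ·) (A i)) ∧ ∀ x ∈ S, (∃ i, x ∈ B i) ∨ ∃ i, x ∈ A i := by
  classical
  induction c with
  | zero =>
    intro S h
    obtain ⟨A, hA, hcov⟩ := exists_antichain_cover k S (by
      intro C hC _
      have := Finset.card_le_card hC
      omega)
    exact ⟨fun _ => ∅, A, fun i => i.elim0, hA, fun x hx => Or.inr (hcov x hx)⟩
  | succ c ih =>
    intro S h
    by_cases hC : ∀ C ⊆ S, IsChain (· ≤ ·) (C : Set α) → C.card ≤ k
    · obtain ⟨A, hA, hcov⟩ := exists_antichain_cover k S hC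
      exact ⟨fun _ => ∅, A, fun i => by simp, hA, fun x hx => Or.inr (hcov x hx)⟩
    · push Not at hC
      obtain ⟨C, hCS, hchain, hcard⟩ := hC
      obtain ⟨B, A, hB, hA, hcov⟩ := ih (S \ C) (by
        have h1 := Finset.card_sdiff_add_card_eq_card hCS
        have h2 : (c + 1 + 1) * (k + 1) = (c + 1) * (k + 1) + (k + 1) := by ring
        omega)
      refine ⟨Fin.cons (C : Set α) B, A, ?_, hA, ?_⟩
      · intro i
        refine Fin.cases ?_ (fun i => ?_) i
        · simpa using hchain
        · simpa using hB i
      · intro x hx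
        by_cases hxC : x ∈ C
        · exact Or.inl ⟨0, by simpa using hxC⟩
        · rcases hcov x (Finset.mem_sdiff.2 ⟨hx, hxC⟩) with ⟨i, hi⟩ | h
          · exact Or.inl ⟨i.succ, by simpa using hi⟩
          · exact Or.inr h

/-- If any two points of the family `(a, b)` over `T` have slope at most `1`, a single `1`-Lipschitz
strip of half-width `δ` covers all closed squares of side `δ` centred at these points. The graph is
a Lipschitz extension, clamped to `[0,1]`; clamping does not increase the distance to points
with `y ∈ [0,1]`. -/
lemma exists_strip {ι : Type*} (T : Set ι) (a b : ι → ℝ) (δ : ℝ)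
    (hT : ∀ s ∈ T, ∀ t ∈ T, |b s - b t| ≤ |a s - a t|) :
    ∃ f : ℝ → ℝ, LipschitzOnWith 1 f (Icc 0 1) ∧ (∀ x ∈ Icc (0:ℝ) 1, f x ∈ Icc (0:ℝ) 1) ∧
      ∀ t ∈ T, ∀ x y : ℝ, y ∈ Icc (0:ℝ) 1 → |x - a t| ≤ δ / 2 → |y - b t| ≤ δ / 2 →
        |y - f x| ≤ δ := by
  classical
  obtain ⟨f₀, hf₀⟩ : ∃ f₀ : ℝ → ℝ, ∀ t ∈ T, f₀ (a t) = b t := by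
    refine ⟨fun x => if h : ∃ t ∈ T, a t = x then b h.choose else 0, fun t ht => ?_⟩
    have h : ∃ s ∈ T, a s = a t := ⟨t, ht, rfl⟩
    have h1 := hT _ h.choose_spec.1 t ht
    rw [h.choose_spec.2, sub_self, abs_zero] at h1
    simp only [dif_pos h]
    exact sub_eq_zero.1 (abs_eq_zero.1 (le_antisymm h1 (abs_nonneg _)))
  have hl : LipschitzOnWith 1 f₀ (a '' T) := by
    refine LipschitzOnWith.of_dist_le_mul ?_
    rintro _ ⟨s, hs, rfl⟩ _ ⟨t, ht, rfl⟩
    rw [hf₀ s hs, hf₀ t ht]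
    simpa [Real.dist_eq] using hT s hs t ht
  obtain ⟨F, hF, hFe⟩ := hl.extend_real
  have hF' : ∀ x y, |F x - F y| ≤ |x - y| := fun x y => by
    simpa [Real.dist_eq] using hF.dist_le_mul x y
  have hclamp : ∀ u v : ℝ, |max 0 (min 1 u) - max 0 (min 1 v)| ≤ |u - v| := fun u v => by
    have h1 := abs_max_sub_max_le_max 0 (min 1 u) 0 (min 1 v)
    have h2 := abs_min_sub_min_le_max 1 u 1 v
    rw [sub_self, abs_zero, max_eq_right (abs_nonneg (min 1 u - min 1 v))] at h1
    rw [sub_self, abs_zero, max_eq_right (abs_nonneg (u - v))] at h2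
    exact h1.trans h2
  refine ⟨fun x => max 0 (min 1 (F x)), ?_, ?_, ?_⟩
  · refine LipschitzOnWith.of_dist_le_mul fun x _ y _ => ?_
    simpa [Real.dist_eq] using (hclamp _ _).trans (hF' x y)
  · intro x _
    exact ⟨le_max_left _ _, max_le zero_le_one (min_le_left _ _)⟩
  · intro t ht x y hy hx hyb
    have h1 : F (a t) = b t := by
      rw [← hFe (mem_image_of_mem a ht), hf₀ t ht]
    have h2 := hclamp y (F x)
    rw [min_eq_right hy.2, max_eq_right hy.1] at h2
    have h3 := hF' (a t) x
    rw [h1, abs_sub_comm (a t)] at h3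
    have h4 := abs_sub_le y (b t) (F x)
    simp only
    linarith

/-- The grid cell of side `δ` with lower left corner `(δ i, δ j)`. -/
def gridCell (δ : ℝ) (z : ℤ × ℤ) : Set (ℝ × ℝ) :=
  Ico (δ * z.1) (δ * z.1 + δ) ×ˢ Ico (δ * z.2) (δ * z.2 + δ)

/-- The index of the grid cell of side `δ` containing `p`. -/
noncomputable def cellIndex (δ : ℝ) (p : ℝ × ℝ) : ℤ × ℤ := (⌊p.1 / δ⌋, ⌊p.2 / δ⌋)

lemma mem_gridCell_iff {δ : ℝ} (hδ : 0 < δ) (z : ℤ × ℤ) (p : ℝ × ℝ) :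
    p ∈ gridCell δ z ↔ cellIndex δ p = z := by
  have key : ∀ (x : ℝ) (n : ℤ), x ∈ Ico (δ * n) (δ * n + δ) ↔ ⌊x / δ⌋ = n := by
    intro x n
    rw [Int.floor_eq_iff, le_div_iff₀ hδ, div_lt_iff₀ hδ, mem_Ico]
    constructor <;> rintro ⟨h1, h2⟩ <;> constructor <;> nlinarith
  rw [gridCell, mem_prod, key, key, cellIndex, Prod.ext_iff]

lemma finite_cellIndex_image {K : Set (ℝ × ℝ)}
    (hK1 : K ⊆ Icc (0:ℝ) 1 ×ˢ Icc (0:ℝ) 1) {δ : ℝ} (hδ : 0 < δ) :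
    (cellIndex δ '' K).Finite := by
  refine ((finite_Icc (0:ℤ) ⌊1 / δ⌋).prod (finite_Icc (0:ℤ) ⌊1 / δ⌋)).subset ?_
  rintro _ ⟨p, hp, rfl⟩
  obtain ⟨⟨h1, h2⟩, h3, h4⟩ := hK1 hp
  refine ⟨⟨?_, ?_⟩, ?_, ?_⟩
  · exact Int.floor_nonneg.2 (by positivity)
  · exact Int.floor_le_floor (by gcongr)
  · exact Int.floor_nonneg.2 (by positivity)
  · exact Int.floor_le_floor (by gcongr)

lemma card_cells_mul_sq_le {K : Set (ℝ × ℝ)} {δ : ℝ} (hδ : 0 < δ)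
    (S : Finset (ℤ × ℤ)) (hS : (S : Set (ℤ × ℤ)) ⊆ cellIndex δ '' K) :
    (S.card : ENNReal) * ENNReal.ofReal (δ ^ 2) ≤ volume (Metric.cthickening δ K) := by
  have hvol : ∀ z, volume (gridCell δ z) = ENNReal.ofReal (δ ^ 2) := by
    intro z
    rw [gridCell, Measure.volume_eq_prod, Measure.prod_prod, Real.volume_Ico, Real.volume_Ico,
      add_sub_cancel_left, add_sub_cancel_left, ← ENNReal.ofReal_mul hδ.le, sq]
  have hunion : volume (⋃ z ∈ S, gridCell δ z) = (S.card : ENNReal) * ENNReal.ofReal (δ ^ 2) := by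
    rw [measure_biUnion_finset]
    · simp [hvol]
    · intro z _ w _ hzw
      refine Set.disjoint_left.2 fun p hp hp' => hzw ?_
      rw [← (mem_gridCell_iff hδ z p).1 hp, (mem_gridCell_iff hδ w p).1 hp']
    · intro z _
      exact measurableSet_Ico.prod measurableSet_Ico
  rw [← hunion]
  refine measure_mono (iUnion₂_subset fun z hz p hp => ?_)
  obtain ⟨q, hq, hqz⟩ := hS hz
  have hq' := (mem_gridCell_iff hδ z q).2 hqz
  refine Metric.mem_cthickening_of_dist_le p q δ K hq ?_
  obtain ⟨⟨h1, h2⟩, h3, h4⟩ := hp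
  obtain ⟨⟨h5, h6⟩, h7, h8⟩ := hq'
  rw [Prod.dist_eq, Real.dist_eq, Real.dist_eq]
  exact max_le (abs_le.2 ⟨by linarith, by linarith⟩) (abs_le.2 ⟨by linarith, by linarith⟩)

theorem compact_covered_by_lipschitz_strips
    (K : Set (ℝ × ℝ)) (hK : IsCompact K)
    (hK1 : K ⊆ Set.Icc (0:ℝ) 1 ×ˢ Set.Icc (0:ℝ) 1)
    (ε : ℝ) (hε : 0 < ε) :
    ∃ δ₀ > (0 : ℝ), ∀ δ : ℝ, 0 < δ → δ ≤ δ₀ →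
      ∃ (N M : ℕ) (f : Fin N → ℝ → ℝ) (g : Fin M → ℝ → ℝ),
        δ * N ≤ Real.sqrt (volume K).toReal + ε ∧
        δ * M ≤ Real.sqrt (volume K).toReal + ε ∧
        (∀ i, LipschitzOnWith 1 (f i) (Set.Icc 0 1)) ∧
        (∀ i, ∀ x ∈ Set.Icc (0:ℝ) 1, f i x ∈ Set.Icc (0:ℝ) 1) ∧
        (∀ j, LipschitzOnWith 1 (g j) (Set.Icc 0 1)) ∧
        (∀ j, ∀ y ∈ Set.Icc (0:ℝ) 1, g j y ∈ Set.Icc (0:ℝ) 1) ∧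
        ∀ p ∈ K, (∃ i, p.1 ∈ Set.Icc (0:ℝ) 1 ∧ |p.2 - f i p.1| ≤ δ) ∨
          ∃ j, p.2 ∈ Set.Icc (0:ℝ) 1 ∧ |p.1 - g j p.2| ≤ δ := by
  classical
  have hfin : volume K ≠ ⊤ := hK.measure_lt_top.ne
  obtain ⟨δ₀, hδ₀, hsmall⟩ : ∃ δ₀ > (0:ℝ), ∀ δ, 0 < δ → δ ≤ δ₀ →
      volume (Metric.cthickening δ K) ≤ volume K + ENNReal.ofReal (ε ^ 2) := by
    have ht : Filter.Tendsto (fun r => volume (Metric.cthickening r K)) (nhds 0)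
        (nhds (volume K)) := tendsto_measure_cthickening_of_isCompact hK
    have hev := ht.eventually (gt_mem_nhds (ENNReal.lt_add_right hfin
      (ENNReal.ofReal_pos.2 (pow_pos hε 2)).ne'))
    obtain ⟨r, hr, hball⟩ := Metric.eventually_nhds_iff.1 hev
    refine ⟨r / 2, half_pos hr, fun δ h0 hδ => (hball ?_).le⟩
    rw [Real.dist_eq, sub_zero, abs_of_pos h0]
    linarith
  refine ⟨δ₀, hδ₀, fun δ hδ hδδ₀ => ?_⟩
  set S := (finite_cellIndex_image hK1 hδ).toFinset with hSdef
  have hcard := (card_cells_mul_sq_le hδ S (by simp [hSdef])).trans (hsmall δ hδ hδδ₀)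
  have hcardR : (S.card : ℝ) * δ ^ 2 ≤ (volume K).toReal + ε ^ 2 := by
    have := ENNReal.toReal_mono (by finiteness) hcard
    rwa [ENNReal.toReal_mul, ENNReal.toReal_natCast, ENNReal.toReal_ofReal (sq_nonneg δ),
      ENNReal.toReal_add hfin (by finiteness), ENNReal.toReal_ofReal (sq_nonneg ε)] at this
  set k := Nat.sqrt S.card with hk
  have hbound : δ * k ≤ Real.sqrt (volume K).toReal + ε := by
    have h1 : (k : ℝ) * k ≤ S.card := by exact_mod_cast Nat.sqrt_le S.card
    have hs := Real.sqrt_nonneg (volume K).toReal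
    have h2 := Real.sq_sqrt (ENNReal.toReal_nonneg (a := volume K))
    refine abs_le_of_sq_le_sq' ?_ (by positivity) |>.2
    nlinarith [mul_le_mul_of_nonneg_right h1 (sq_nonneg δ), mul_nonneg hs hε.le]
  -- `(a z, b z)` is the centre of the cell `z`; the rotation acts on the integer cell indices.
  let a : ℤ × ℤ → ℝ := fun z => δ * z.1 + δ / 2
  let b : ℤ × ℤ → ℝ := fun z => δ * z.2 + δ / 2
  let rot : ℤ × ℤ → ℤ × ℤ := fun z => (z.1 + z.2, z.1 - z.2)
  obtain ⟨B, A, hB, hA, hcov⟩ := exists_chains_antichains k k (S.image rot)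
    (Finset.card_image_le.trans_lt (Nat.lt_succ_sqrt S.card))
  have habs : ∀ m n : ℤ, |m| ≤ |n| → |δ * m| ≤ |δ * n| := by
    intro m n h
    rw [abs_mul, abs_mul]
    have : |(m:ℝ)| ≤ |(n:ℝ)| := by exact_mod_cast h
    gcongr
  have ha : ∀ s t, a s - a t = δ * ((s.1 - t.1 : ℤ) : ℝ) := fun s t => by
    simp only [a]; push_cast; ring
  have hb : ∀ s t, b s - b t = δ * ((s.2 - t.2 : ℤ) : ℝ) := fun s t => by
    simp only [b]; push_cast; ring
  have hH : ∀ i, ∀ s ∈ rot ⁻¹' B i, ∀ t ∈ rot ⁻¹' B i, |b s - b t| ≤ |a s - a t| := by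
    intro i s hs t ht
    rw [ha, hb]
    apply habs
    have := (hB i).total hs ht
    simp only [rot, Prod.le_def] at this
    grind
  have hV : ∀ i, ∀ s ∈ rot ⁻¹' A i, ∀ t ∈ rot ⁻¹' A i, |a s - a t| ≤ |b s - b t| := by
    intro i s hs t ht
    rw [ha, hb]
    apply habs
    by_cases hst : rot s = rot t
    · simp only [rot, Prod.ext_iff] at hst
      grind
    · have h1 : ¬ rot s ≤ rot t := hA i hs ht hst
      have h2 : ¬ rot t ≤ rot s := hA i ht hs (Ne.symm hst)
      simp only [rot, Prod.le_def] at h1 h2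
      grind
  choose f hf1 hf2 hf3 using fun i => exists_strip (rot ⁻¹' B i) a b δ (hH i)
  choose g hg1 hg2 hg3 using fun i => exists_strip (rot ⁻¹' A i) b a δ (hV i)
  refine ⟨k, k, f, g, hbound, hbound, hf1, hf2, hg1, hg2, fun p hp => ?_⟩
  obtain ⟨hp1, hp2⟩ := hK1 hp
  have hzS : cellIndex δ p ∈ S := by
    rw [hSdef, Finite.mem_toFinset]
    exact mem_image_of_mem _ hp
  obtain ⟨⟨h1, h2⟩, h3, h4⟩ := (mem_gridCell_iff hδ _ p).2 rfl
  have hx : |p.1 - a (cellIndex δ p)| ≤ δ / 2 :=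
    abs_le.2 ⟨by simp only [a]; linarith, by simp only [a]; linarith⟩
  have hy : |p.2 - b (cellIndex δ p)| ≤ δ / 2 :=
    abs_le.2 ⟨by simp only [b]; linarith, by simp only [b]; linarith⟩
  rcases hcov _ (Finset.mem_image_of_mem rot hzS) with ⟨i, hi⟩ | ⟨j, hj⟩
  · exact Or.inl ⟨i, hp1, hf3 i _ hi _ _ hp2 hx hy⟩
  · exact Or.inr ⟨j, hp2, hg3 j _ hj _ _ hp1 hy hx⟩
end

section
/- Let K ⊂ [0,1]² be a compact set and let ε > 0. For any sufficiently small δ > 0 (depending on ε and K), there exist N functions f_i : [0,1] → [0,1] and M functions g_j : [0,1] → [0,1] such that: (i) δN ≤ √|K| + ε and δM ≤ √|K| + ε; (ii) each f_i and each g_j is 1-Lipschitz; (iii) K ⊂ ⋃_{i=1}^N H_i ∪ ⋃_{j=1}^M V_j where H_i := {(x,y) : x ∈ [0,1], |y − f_i(x)| ≤ δ} and V_j := {(x,y) : y ∈ [0,1], |x − g_j(y)| ≤ δ}; (iv) f_{i+1} ≤ f_i − 2δ for 1 ≤ i ≤ N−1 and g_{j+1} ≤ g_j − 2δ for 1 ≤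 j ≤ M−1, equivalently Σ_{i=1}^N χ_{{|f_i(x)−y|<δ}} ≤ 1 and Σ_{j=1}^M χ_{{|g_j(y)−x|<δ}} ≤ 1 (the open horizontal strips are pairwise disjoint and likewise the open vertical strips); (v) δ ≤ f_i ≤ 1 − δ and δ ≤ g_j ≤ 1 − δ for all i, j, equivalently all strips H_i and V_j are contained in [0,1]². -/
open MeasureTheory Set

/-!
In the coordinates `u = x + y`, `v = x - y`, two points lie on a common `1`-Lipschitz graph over the
`x`-axis iff they are comparable in the product order, and incomparable points lie on a common
`1`-Lipschitz graph over the `y`-axis. Cut the `(u, v)`-plane into squares of side `2δ`. By compactness,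
at most `(2|K| + ε²) / (4δ²)` of them meet `K` when `δ` is small (`count_cells`). A finite partially
ordered set of at most `k²` elements is a union of `k` chains and `k` antichains
(`cover_chains_antichains`), and each chain or antichain of cells lies in a single strip of half-width
`δ` (`cover_by_cells`). This gives `k` strips of each kind with `δk ≤ √|K| + ε`.

If `√|K| + ε < 1/2`, then `2δk ≤ 1`, so there is enough room to make the strips disjoint and to place
them inside the square without losing any point of it: sort the functions pointwise, push them
down until they are separated, and then up until they respect the bottom side (`exists_separated`).

If `√|K| + ε ≥ 1/2`, up to `1/(2δ)` strips of each kind are allowed, and these cover the whole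
square even when `1/(2δ)` is not an integer (`pinwheel`).
-/

/-! ### Chains and antichains -/

/-- A form of Mirsky's theorem: peeling off the minimal elements `k` times either exhausts `P` or
leaves room for a chain of `k + 1` elements. The least element of that chain is recorded so that
the induction can extend the chain downwards. -/
theorem chain_or_antichains {α : Type*} [PartialOrder α] [DecidableEq α] (k : ℕ) (P : Finset α) :
    (∃ C ⊆ P, IsChain (· ≤ ·) (C : Set α) ∧ C.card = k + 1 ∧ ∃ m ∈ C, ∀ c ∈ C, m ≤ c) ∨
    ∃ A : Fin k → Set α, (∀ i, IsAntichain (· ≤ ·) (A i)) ∧ ∀ p ∈ P, ∃ i, p ∈ A i := by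
  classical
  induction k generalizing P with
  | zero =>
    rcases P.eq_empty_or_nonempty with rfl | ⟨p, hp⟩
    · exact Or.inr ⟨Fin.elim0, fun i => i.elim0, by simp⟩
    · exact Or.inl ⟨{p}, by simpa using hp, by simp, by simp, p, by simp, by simp⟩
  | succ k ih =>
    set B := P.filter (fun p => ∃ q ∈ P, q < p) with hB
    rcases ih B with ⟨C, hCB, hC, hcard, m, hm, hmin⟩ | ⟨A, hA, hcov⟩
    · obtain ⟨hmP, q, hq, hqm⟩ := by simpa [hB] using hCB hm
      left
      have hqC : ∀ c ∈ C, q < c := fun c hc => hqm.trans_le (hmin c hc)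
      refine ⟨insert q C, ?_, ?_, ?_, q, by simp, ?_⟩
      · intro x hx
        rcases Finset.mem_insert.1 hx with rfl | hx
        · exact hq
        · exact (Finset.mem_filter.1 (hCB hx)).1
      · rw [Finset.coe_insert]
        exact hC.insert fun c hc _ => Or.inl (hqC c hc).le
      · rw [Finset.card_insert_of_notMem (fun h => (hqC q h).false), hcard]
      · intro c hc
        rcases Finset.mem_insert.1 hc with rfl | hc
        · exact le_rfl
        · exact (hqC c hc).le
    · right
      refine ⟨Fin.cons {p | p ∈ P ∧ ¬ ∃ q ∈ P, q < p} A, ?_, ?_⟩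
      · intro i
        refine Fin.cases ?_ (fun i => ?_) i
        · intro a ha b hb hab hle
          exact hb.2 ⟨a, ha.1, lt_of_le_of_ne hle hab⟩
        · simpa using hA i
      · intro p hp
        by_cases h : ∃ q ∈ P, q < p
        · obtain ⟨i, hi⟩ := hcov p (Finset.mem_filter.2 ⟨hp, h⟩)
          exact ⟨i.succ, by simpa using hi⟩
        · exact ⟨0, hp, h⟩

/-- Greedy decomposition: chains of more than `k` elements are removed as long as there are any,
which happens at most `j` times; what remains is a union of `k` antichains. -/
theorem cover_chains_antichains {α : Type*} [PartialOrder α] (j k : ℕ) (P : Finset α)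
    (hP : P.card ≤ j * k) :
    ∃ (C : Fin j → Set α) (A : Fin k → Set α), (∀ i, IsChain (· ≤ ·) (C i)) ∧
      (∀ i, IsAntichain (· ≤ ·) (A i)) ∧ ∀ p ∈ P, (∃ i, p ∈ C i) ∨ ∃ i, p ∈ A i := by
  classical
  induction j generalizing P with
  | zero =>
    have : P = ∅ := by simpa using hP
    subst this
    exact ⟨Fin.elim0, fun _ => ∅, fun i => i.elim0, by simp, by simp⟩
  | succ j ih =>
    rcases chain_or_antichains k P with ⟨D, hDP, hD, hcard, -⟩ | ⟨A, hA, hcov⟩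
    · obtain ⟨C, A, hC, hA, hcov⟩ := ih (P \ D) (by
        rw [Finset.card_sdiff_of_subset hDP, hcard]
        have : (j + 1) * k = j * k + k := by ring
        omega)
      refine ⟨Fin.cons D C, A, ?_, hA, ?_⟩
      · intro i
        refine Fin.cases ?_ (fun i => ?_) i
        · simpa using hD
        · simpa using hC i
      · intro p hp
        by_cases h : p ∈ D
        · exact Or.inl ⟨0, by simpa using h⟩
        · rcases hcov p (Finset.mem_sdiff.2 ⟨hp, h⟩) with ⟨i, hi⟩ | h
          · exact Or.inl ⟨i.succ, by simpa using hi⟩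
          · exact Or.inr h
    · exact ⟨fun _ => ∅, A, by simp, hA, fun p hp => Or.inr (hcov p hp)⟩

/-! ### Lipschitz functions through prescribed points -/

/-- Points `(a p, b p)` whose mutual differences have slope at most `1` lie on the graph of a
`1`-Lipschitz function. -/
theorem exists_lipschitz_through {ι : Type*} (s : Set ι) (a b : ι → ℝ)
    (h : ∀ p ∈ s, ∀ q ∈ s, |b p - b q| ≤ |a p - a q|) :
    ∃ f : ℝ → ℝ, LipschitzWith 1 f ∧ ∀ p ∈ s, f (a p) = b p := by
  classical
  rcases isEmpty_or_nonempty ι with hι | hι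
  · exact ⟨fun _ => 0, LipschitzWith.const' 0, fun p => hι.elim p⟩
  set r := Function.invFunOn a s with hr
  have hrs : ∀ p ∈ s, r (a p) ∈ s ∧ a (r (a p)) = a p := fun p hp =>
    Function.invFunOn_pos (f := a) (b := a p) ⟨p, hp, rfl⟩
  have hb : ∀ p ∈ s, b (r (a p)) = b p := fun p hp => by
    have := h _ (hrs p hp).1 p hp
    rw [(hrs p hp).2, sub_self, abs_zero] at this
    linarith [abs_nonpos_iff.1 this]
  have hL : LipschitzOnWith 1 (fun x => b (r x)) (a '' s) := by
    refine LipschitzOnWith.of_dist_le_mul ?_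
    rintro _ ⟨p, hp, rfl⟩ _ ⟨q, hq, rfl⟩
    simpa [hb p hp, hb q hq, Real.dist_eq] using h p hp q hq
  obtain ⟨f, hf, hfe⟩ := hL.extend_real
  exact ⟨f, hf, fun p hp => (hfe ⟨p, hp, rfl⟩).symm.trans (hb p hp)⟩

/-! ### Making strips disjoint -/

/-- Pointwise sorting of finitely many Lipschitz functions in decreasing order, by insertion. The
sorted sequence is indexed by `ℕ` and padded with the constant lower bound `δ`, so that insertion
needs no special treatment of the last index. -/
theorem exists_sorted (δ : ℝ) (n : ℕ) (F : Fin n → ℝ → ℝ) (hF : ∀ i, LipschitzWith 1 (F i))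
    (hδ : ∀ i x, δ ≤ F i x) :
    ∃ h : ℕ → ℝ → ℝ, (∀ i, LipschitzWith 1 (h i)) ∧ (∀ i x, h (i + 1) x ≤ h i x) ∧
      (∀ i, n ≤ i → ∀ x, h i x = δ) ∧
      (∀ c, δ ≤ c → (∀ i x, F i x ≤ c) → ∀ i x, h i x ≤ c) ∧
      (∀ i x, ∃ j < n, h j x = F i x) := by
  induction n with
  | zero =>
    exact ⟨fun _ _ => δ, fun _ => LipschitzWith.const' δ, fun _ _ => le_rfl, fun _ _ _ => rfl,
      fun c hc _ _ _ => hc, fun i => i.elim0⟩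
  | succ n ih =>
    obtain ⟨h, hL, hanti, hend, hub, hcov⟩ := ih (fun i => F i.succ) (fun i => hF _)
      (fun i => hδ _)
    set f := F 0 with hf
    have h1 : LipschitzWith 1 f := hF 0
    have hmax : ∀ {u v : ℝ → ℝ}, LipschitzWith 1 u → LipschitzWith 1 v →
        LipschitzWith 1 (fun x => max (u x) (v x)) := fun hu hv => by simpa using hu.max hv
    have hmin : ∀ {u v : ℝ → ℝ}, LipschitzWith 1 u → LipschitzWith 1 v →
        LipschitzWith 1 (fun x => min (u x) (v x)) := fun hu hv => by simpa using hu.min hv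
    refine ⟨fun i => Nat.casesOn i (fun x => max (f x) (h 0 x))
      (fun i x => max (h (i + 1) x) (min (f x) (h i x))), ?_, ?_, ?_, ?_, ?_⟩
    · rintro (_ | i)
      · exact hmax h1 (hL 0)
      · exact hmax (hL _) (hmin h1 (hL _))
    · rintro (_ | i) x
      · exact max_le ((hanti 0 x).trans (le_max_right _ _)) ((min_le_left _ _).trans
          (le_max_left _ _))
      · exact max_le ((hanti _ x).trans (le_max_left _ _)) ((min_le_right _ _).trans
          (le_max_left _ _))
    · rintro (_ | i) hi x
      · omega
      · show max (h (i + 1) x) (min (f x) (h i x)) = δ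
        rw [hend i (by omega), hend (i + 1) (by omega), min_eq_right (hδ 0 x), max_self]
    · intro c hc hFc
      have := hub c hc (fun i => hFc _)
      rintro (_ | i) x
      · exact max_le (hFc 0 x) (this 0 x)
      · exact max_le (this _ x) ((min_le_left _ _).trans (hFc 0 x))
    · intro i x
      refine Fin.cases ?_ (fun i => ?_) i
      -- The new function takes the first position `j` at which `h j x ≤ f x`.
      · have hex : ∃ j, h j x ≤ f x := ⟨n, by rw [hend n le_rfl]; exact hδ 0 x⟩
        classical
        obtain ⟨j, hj, hj'⟩ : ∃ j, h j x ≤ f x ∧ ∀ l < j, ¬ h l x ≤ f x :=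
          ⟨Nat.find hex, Nat.find_spec hex, fun l hl => Nat.find_min hex hl⟩
        have hjn : j ≤ n := by
          by_contra hc
          exact hj' n (by omega) (by rw [hend n le_rfl]; exact hδ 0 x)
        rcases j with _ | j
        · exact ⟨0, by omega, max_eq_left hj⟩
        · refine ⟨j + 1, by omega, ?_⟩
          have := hj' j (by omega)
          show max (h (j + 1) x) (min (f x) (h j x)) = f x
          rw [min_eq_left (by linarith), max_eq_right hj]
      · obtain ⟨j, hj, hjx⟩ := hcov i x
        rcases le_total (f x) (h j x) with hle | hle
        · rcases j with _ | j
          · exact ⟨0, by omega, by rw [← hjx]; exact max_eq_right hle⟩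
          · refine ⟨j + 1, by omega, ?_⟩
            rw [← hjx]
            exact max_eq_left ((min_le_left _ _).trans hle)
        · refine ⟨j + 1, by omega, ?_⟩
          show max (h (j + 1) x) (min (f x) (h j x)) = F i.succ x
          rw [← hjx, min_eq_right hle, max_eq_right (hanti j x)]

/-- Lowers the functions `h 0, h 1, …` one after the other, each as little as is necessary for it
to lie at least `2 * δ` below its predecessor. -/
noncomputable def pushDown (δ : ℝ) (h : ℕ → ℝ → ℝ) : ℕ → ℝ → ℝ
  | 0 => h 0
  | i + 1 => fun x => min (h (i + 1) x) (pushDown δ h i x - 2 * δ)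

theorem pushDown_le (δ : ℝ) (h : ℕ → ℝ → ℝ) (i : ℕ) (x : ℝ) : pushDown δ h i x ≤ h i x := by
  cases i with
  | zero => exact le_rfl
  | succ i => exact min_le_left _ _

theorem pushDown_succ_le (δ : ℝ) (h : ℕ → ℝ → ℝ) (i : ℕ) (x : ℝ) :
    pushDown δ h (i + 1) x ≤ pushDown δ h i x - 2 * δ := min_le_right _ _

theorem lipschitz_pushDown (δ : ℝ) (h : ℕ → ℝ → ℝ) (hL : ∀ i, LipschitzWith 1 (h i)) (i : ℕ) :
    LipschitzWith 1 (pushDown δ h i) := by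
  induction i with
  | zero => exact hL 0
  | succ i ih =>
    have : LipschitzWith 1 (fun x => pushDown δ h i x - 2 * δ) := by
      simpa using ih.sub (LipschitzWith.const (2 * δ))
    simpa [pushDown] using (hL (i + 1)).min this

/-- The lowered strips still cover the strips around a decreasing sequence `h`: wherever `h i` has
been lowered, its strip touches the previous one, so the strips form an unbroken block reaching up
to a function which has not been moved. -/
theorem pushDown_cover (δ : ℝ) (h : ℕ → ℝ → ℝ)
    (hanti : ∀ i x, h (i + 1) x ≤ h i x) (x y : ℝ) (i : ℕ)
    (h1 : pushDown δ h i x - δ ≤ y) (h2 : y ≤ h i x + δ) :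
    ∃ j ≤ i, |y - pushDown δ h j x| ≤ δ := by
  induction i with
  | zero => exact ⟨0, le_rfl, abs_le.2 ⟨by linarith, by simp only [pushDown] at *; linarith⟩⟩
  | succ i ih =>
    by_cases hy : y ≤ pushDown δ h (i + 1) x + δ
    · exact ⟨i + 1, le_rfl, abs_le.2 ⟨by linarith, by linarith⟩⟩
    · push Not at hy
      have : pushDown δ h (i + 1) x = pushDown δ h i x - 2 * δ := by
        simp only [pushDown] at hy ⊢
        rcases min_choice (h (i + 1) x) (pushDown δ h i x - 2 * δ) with hc | hc
        · rw [hc] at hy; linarith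
        · exact hc
      obtain ⟨j, hj, hjy⟩ := ih (by linarith) (by linarith [hanti i x])
      exact ⟨j, by omega, hjy⟩

/-- Any `N` Lipschitz strips with `2 * δ * N ≤ 1` can be replaced by `N` separated strips inside
the unit square which cover at least the same part of it: the functions are clamped to
`[δ, 1 - δ]`, sorted, pushed down, and finally pushed up above the flat stack of strips that rests
on the bottom side. -/
theorem exists_separated (δ : ℝ) (hδ : 0 < δ) (N : ℕ) (hN : 2 * δ * N ≤ 1) (F : Fin N → ℝ → ℝ)
    (hF : ∀ i, LipschitzWith 1 (F i)) :
    ∃ f : Fin N → ℝ → ℝ, (∀ i, LipschitzWith 1 (f i)) ∧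
      (∀ i : Fin N, ∀ hi : (i : ℕ) + 1 < N, ∀ x, f ⟨(i : ℕ) + 1, hi⟩ x ≤ f i x - 2 * δ) ∧
      (∀ i x, f i x ∈ Icc δ (1 - δ)) ∧
      ∀ x, ∀ y ∈ Icc (0:ℝ) 1, (∃ i, |y - F i x| ≤ δ) → ∃ i, |y - f i x| ≤ δ := by
  rcases Nat.eq_zero_or_pos N with rfl | hpos
  · exact ⟨F, hF, fun i => i.elim0, fun i => i.elim0, fun _ _ _ h => h⟩
  have hN1 : (1:ℝ) ≤ N := by exact_mod_cast hpos
  have hδ1 : δ ≤ 1 - δ := by nlinarith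
  obtain ⟨h, hL, hanti, -, hub, hcov⟩ := exists_sorted δ N
    (fun i x => max δ (min (1 - δ) (F i x)))
    (fun i => by simpa using ((hF i).const_min (1 - δ)).const_max δ)
    (fun i x => le_max_left _ _)
  have hub' := hub (1 - δ) hδ1 (fun i x => max_le hδ1 (min_le_left _ _))
  set d := pushDown δ h
  have hcast : ∀ i : Fin N, ((i : ℕ) : ℝ) + 1 ≤ N := fun i => by exact_mod_cast i.2
  set b : ℕ → ℝ := fun i => δ + 2 * δ * (N - 1 - i) with hb
  refine ⟨fun i x => max (d i x) (b i), fun i => ?_, ?_, ?_, ?_⟩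
  · simpa using (lipschitz_pushDown δ h hL i).max_const (b i)
  · intro i hi x
    have := pushDown_succ_le δ h i x
    refine max_le ?_ ?_
    · exact this.trans (by gcongr; exact le_max_left _ _)
    · have : b (i + 1) = b i - 2 * δ := by simp only [hb]; push_cast; ring
      show b (i + 1) ≤ _
      rw [this]
      gcongr; exact le_max_right _ _
  · intro i x
    have h0 : 0 ≤ 2 * δ * (N - 1 - (i : ℕ)) := mul_nonneg (by positivity) (by linarith [hcast i])
    have h1 : 0 ≤ 2 * δ * (i : ℕ) := by positivity
    refine ⟨le_max_of_le_right (by simp only [hb]; linarith), max_le ?_ ?_⟩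
    · exact (pushDown_le δ h i x).trans (hub' i x)
    · simp only [hb]; nlinarith
  · rintro x y ⟨hy0, hy1⟩ ⟨i, hi⟩
    have hclamp : |y - max δ (min (1 - δ) (F i x))| ≤ δ := by
      rw [abs_le] at hi ⊢
      rcases max_cases δ (min (1 - δ) (F i x)) with h | h <;>
      rcases min_cases (1 - δ) (F i x) with h' | h' <;> constructor <;> linarith
    obtain ⟨j, hj, hjx⟩ := hcov i x
    rw [← hjx, abs_le] at hclamp
    obtain ⟨l, hl, hly⟩ := pushDown_cover δ h hanti x y j
      (by linarith [pushDown_le δ h j x]) (by linarith)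
    rw [abs_le] at hly
    -- If `y` lies below the strip of index `l`, that strip was raised onto the flat stack, so `y` is
    -- covered further down in the stack.
    have key : ∀ n l : ℕ, l + n + 1 = N → d l x - δ ≤ y → y ≤ max (d l x) (b l) + δ →
        ∃ i : Fin N, |y - max (d i x) (b i)| ≤ δ := by
      intro n
      induction n with
      | zero =>
        intro l hl h1 h2
        refine ⟨⟨l, by omega⟩, abs_le.2 ⟨?_, by simp only; linarith⟩⟩
        have : b l = δ := by
          have : (N : ℝ) = l + 1 := by rw [← hl]; simp
          simp only [hb, this]; ring
        rcases max_cases (d l x) (b l) with h | h <;> simp only <;> linarith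
      | succ n ih =>
        intro l hl h1 h2
        by_cases hy : max (d l x) (b l) - δ ≤ y
        · exact ⟨⟨l, by omega⟩, abs_le.2 ⟨by simp only; linarith, by simp only; linarith⟩⟩
        · push Not at hy
          have hbl : b (l + 1) = b l - 2 * δ := by simp only [hb]; push_cast; ring
          refine ih (l + 1) (by omega) ?_ ?_
          · linarith [pushDown_succ_le δ h l x]
          · have := le_max_right (d (l + 1) x) (b (l + 1))
            rcases max_cases (d l x) (b l) with h | h <;> linarith
    exact key (N - 1 - l) l (by omega) (by linarith) (by
      have := le_max_left (d l x) (b l); linarith)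

/-! ### Covering the whole square -/

/-- The whole unit square is covered by `⌊1 / (2 * δ)⌋` horizontal and as many vertical strips.
Each flat family misses a band of width `r = 1 - 2 * δ * N`. The horizontal one is shifted so that it
misses the bottom edge on the left half and the top edge on the right half; the vertical one misses
the right edge on the lower half and the left edge on the upper half. These four gaps are arranged
like a pinwheel and do not meet. -/
theorem pinwheel (δ : ℝ) (hδ : 0 < δ) (hδ8 : δ ≤ 1 / 8) :
    ∃ (N : ℕ) (f g : Fin N → ℝ → ℝ), δ * N ≤ 1 / 2 ∧
      (∀ i, LipschitzWith 1 (f i)) ∧ (∀ i, LipschitzWith 1 (g i)) ∧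
      (∀ x ∈ Icc (0:ℝ) 1, ∀ y ∈ Icc (0:ℝ) 1, (∃ i, |y - f i x| ≤ δ) ∨ ∃ i, |x - g i y| ≤ δ) ∧
      (∀ i : Fin N, ∀ hi : (i : ℕ) + 1 < N, ∀ x, f ⟨(i : ℕ) + 1, hi⟩ x ≤ f i x - 2 * δ) ∧
      (∀ i : Fin N, ∀ hi : (i : ℕ) + 1 < N, ∀ x, g ⟨(i : ℕ) + 1, hi⟩ x ≤ g i x - 2 * δ) ∧
      (∀ i x, f i x ∈ Icc δ (1 - δ)) ∧ (∀ i x, g i x ∈ Icc δ (1 - δ)) := by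
  set N := ⌊1 / (2 * δ)⌋₊ with hNdef
  have hN1 : (N : ℝ) * (2 * δ) ≤ 1 := by
    rw [← le_div_iff₀ (by positivity)]; exact Nat.floor_le (by positivity)
  have hN2 : 1 < (N + 1 : ℝ) * (2 * δ) := by
    rw [← div_lt_iff₀ (by positivity)]; exact Nat.lt_floor_add_one _
  set r := 1 - N * (2 * δ) with hr
  have hr0 : 0 ≤ r := by linarith
  have hr1 : r < 1 / 4 := by linarith
  -- A flat family lowered by `s` covers all heights between `r - s` and `1 - s`.
  have hflat : ∀ s y : ℝ, r - s ≤ y → y ≤ 1 - s →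
      ∃ i : Fin N, |y - (1 - δ - 2 * δ * (i : ℕ) - s)| ≤ δ := by
    intro s y h1 h2
    have hNpos : 0 < N := by
      rw [hNdef, Nat.floor_pos, le_div_iff₀ (by positivity)]; linarith
    have hq0 : 0 ≤ (1 - s - y) / (2 * δ) := div_nonneg (by linarith) (by positivity)
    by_cases hq : ⌊(1 - s - y) / (2 * δ)⌋₊ < N
    · refine ⟨⟨_, hq⟩, ?_⟩
      have h3 := Nat.floor_le hq0
      have h4 := Nat.lt_floor_add_one ((1 - s - y) / (2 * δ))
      rw [le_div_iff₀ (by positivity)] at h3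
      rw [div_lt_iff₀ (by positivity)] at h4
      rw [abs_le]; constructor <;> simp only <;> linarith
    · push Not at hq
      have h3 : (N : ℝ) ≤ (1 - s - y) / (2 * δ) := (Nat.le_floor_iff hq0).1 hq
      rw [le_div_iff₀ (by positivity)] at h3
      refine ⟨⟨N - 1, by omega⟩, ?_⟩
      have : ((N - 1 : ℕ) : ℝ) = N - 1 := by rw [Nat.cast_sub hNpos]; simp
      simp only [this]
      rw [abs_le]; constructor <;> linarith
  have hbd : ∀ s : ℝ, 0 ≤ s → s ≤ r → ∀ i : Fin N,
      1 - δ - 2 * δ * (i : ℕ) - s ∈ Icc δ (1 - δ) := by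
    intro s hs0 hsr i
    have hi : ((i : ℕ) : ℝ) + 1 ≤ N := by exact_mod_cast i.2
    have h1 : 0 ≤ 2 * δ * (i : ℕ) := by positivity
    constructor
    · nlinarith
    · linarith
  set φ : ℝ → ℝ := fun x => max 0 (min r (x - 1 / 2)) with hφ
  set ψ : ℝ → ℝ := fun y => max 0 (min r (1 / 2 - y)) with hψ
  have hφL : LipschitzWith 1 φ := by
    have : LipschitzWith 1 (fun x : ℝ => x - 1 / 2) := by
      simpa using LipschitzWith.id.sub (LipschitzWith.const (1 / 2 : ℝ))
    exact (this.const_min r).const_max 0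
  have hψL : LipschitzWith 1 ψ := by
    have : LipschitzWith 1 (fun x : ℝ => 1 / 2 - x) := by
      simpa using (LipschitzWith.const (1 / 2 : ℝ)).sub LipschitzWith.id
    exact (this.const_min r).const_max 0
  have hL : ∀ u : ℝ → ℝ, LipschitzWith 1 u → ∀ c, LipschitzWith 1 (fun x => c - u x) := by
    intro u hu c
    simpa using (LipschitzWith.const c).sub hu
  have hsep : ∀ (i : ℕ) (s : ℝ), 1 - δ - 2 * δ * ((i + 1 : ℕ) : ℝ) - s ≤
      1 - δ - 2 * δ * (i : ℝ) - s - 2 * δ := by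
    intro i s; push_cast; linarith
  refine ⟨N, fun i x => 1 - δ - 2 * δ * (i : ℕ) - φ x, fun i x => 1 - δ - 2 * δ * (i : ℕ) - ψ x,
    by linarith, fun i => hL _ hφL _, fun i => hL _ hψL _, ?_,
    fun i hi x => hsep i _, fun i hi x => hsep i _,
    fun i x => hbd _ (le_max_left _ _) (max_le hr0 (min_le_left _ _)) i,
    fun i x => hbd _ (le_max_left _ _) (max_le hr0 (min_le_left _ _)) i⟩
  rintro x ⟨hx0, hx1⟩ y ⟨hy0, hy1⟩
  by_cases h1 : r - φ x ≤ y
  · by_cases h2 : y ≤ 1 - φ x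
    · exact Or.inl (hflat _ _ h1 h2)
    · right
      push Not at h2
      have hx : 1 / 2 < x ∧ 1 - r < y := by
        simp only [hφ] at h2
        rcases max_cases 0 (min r (x - 1 / 2)) with h | h <;>
        rcases min_cases r (x - 1 / 2) with h' | h' <;> constructor <;> linarith
      have : ψ y = 0 := max_eq_left ((min_le_right _ _).trans (by linarith))
      exact hflat _ _ (by linarith) (by linarith)
  · right
    push Not at h1
    have hx : x < 1 / 2 + r ∧ y < r := by
      simp only [hφ] at h1
      rcases max_cases 0 (min r (x - 1 / 2)) with h | h <;>
      rcases min_cases r (x - 1 / 2) with h' | h' <;> constructor <;> linarith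
    have : ψ y = r := by
      simp only [hψ]
      rw [min_eq_left (by linarith), max_eq_right hr0]
    exact hflat _ _ (by linarith) (by linarith)

/-! ### Covering by grid cells -/

/-- The coordinates `(x + y, x - y)` double the area. -/
theorem volume_rotated (K : Set (ℝ × ℝ)) :
    volume ((fun p : ℝ × ℝ => (p.1 + p.2, p.1 - p.2)) '' K) = 2 * volume K := by
  have h := Measure.addHaar_image_linearMap (volume : Measure (ℝ × ℝ))
    (Matrix.toLin (Module.Basis.finTwoProd ℝ) (Module.Basis.finTwoProd ℝ) !![1, 1; 1, -1]) K
  have hfun : ((Matrix.toLin (Module.Basis.finTwoProd ℝ) (Module.Basis.finTwoProd ℝ)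
      !![1, 1; 1, -1] : ℝ × ℝ →ₗ[ℝ] ℝ × ℝ) : ℝ × ℝ → ℝ × ℝ) =
      fun p : ℝ × ℝ => (p.1 + p.2, p.1 - p.2) := by
    funext p
    rw [Matrix.toLin_finTwoProd_apply]
    simp [sub_eq_add_neg]
  have hdet : |LinearMap.det (Matrix.toLin (Module.Basis.finTwoProd ℝ)
      (Module.Basis.finTwoProd ℝ) !![(1:ℝ), 1; 1, -1])| = 2 := by
    rw [LinearMap.det_toLin, Matrix.det_fin_two_of]
    norm_num
  rw [hdet, hfun] at h
  simpa using h

/-- The squares of a grid of mesh `s` which meet a compact set lie in its `s`-neighbourhood, so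
their total area exceeds that of the set by arbitrarily little. -/
theorem count_cells (K : Set (ℝ × ℝ)) (hK : IsCompact K) (η : ℝ) (hη : 0 < η) :
    ∃ ρ > (0:ℝ), ∀ s, 0 < s → s ≤ ρ → ∃ P : Finset (ℤ × ℤ),
      (∀ p ∈ K, (⌊p.1 / s⌋, ⌊p.2 / s⌋) ∈ P) ∧ P.card * s ^ 2 ≤ (volume K).toReal + η := by
  classical
  have hlt : volume K < volume K + ENNReal.ofReal η :=
    ENNReal.lt_add_right hK.measure_lt_top.ne (by simpa using hη)
  have hev := (tendsto_measure_cthickening_of_isCompact (μ := volume) hK).eventually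
    (eventually_lt_nhds hlt)
  obtain ⟨ρ, hρ, hball⟩ := Metric.eventually_nhds_iff.1 hev
  refine ⟨ρ / 2, by positivity, fun s hs hsρ => ?_⟩
  set q : ℝ × ℝ → ℤ × ℤ := fun p => (⌊p.1 / s⌋, ⌊p.2 / s⌋) with hq
  have hfl : ∀ t : ℝ, ⌊t / s⌋ * s ≤ t ∧ t < (⌊t / s⌋ + 1) * s := fun t =>
    ⟨by rw [← le_div_iff₀ hs]; exact Int.floor_le _,
      by rw [← div_lt_iff₀ hs]; exact Int.lt_floor_add_one _⟩
  have hfin : (q '' K).Finite := by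
    obtain ⟨R, hR⟩ := hK.isBounded.exists_norm_le
    refine (Set.finite_Icc ((⌊-R / s⌋, ⌊-R / s⌋) : ℤ × ℤ) (⌊R / s⌋, ⌊R / s⌋)).subset ?_
    rintro _ ⟨p, hp, rfl⟩
    have h1 := abs_le.1 ((norm_fst_le p).trans (hR p hp))
    have h2 := abs_le.1 ((norm_snd_le p).trans (hR p hp))
    have hm : ∀ {a b : ℝ}, a ≤ b → ⌊a / s⌋ ≤ ⌊b / s⌋ := fun h =>
      Int.floor_le_floor (div_le_div_of_nonneg_right h hs.le)
    exact ⟨⟨hm h1.1, hm h2.1⟩, ⟨hm h1.2, hm h2.2⟩⟩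
  refine ⟨hfin.toFinset, fun p hp => by simpa using ⟨p.1, p.2, hp, rfl⟩, ?_⟩
  set cell : ℤ × ℤ → Set (ℝ × ℝ) := fun c =>
    Ico (c.1 * s) ((c.1 + 1) * s) ×ˢ Ico (c.2 * s) ((c.2 + 1) * s) with hcell
  have hvol : ∀ c, volume (cell c) = ENNReal.ofReal (s ^ 2) := fun c => by
    simp only [hcell]
    rw [Measure.volume_eq_prod, Measure.prod_prod, Real.volume_Ico, Real.volume_Ico,
      ← ENNReal.ofReal_mul (by linarith)]
    congr 1; ring
  have hmemcell : ∀ c p, p ∈ cell c → q p = c := by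
    rintro ⟨m, n⟩ p ⟨⟨h1, h2⟩, h3, h4⟩
    have : ∀ (t : ℝ) (m : ℤ), m * s ≤ t → t < (m + 1) * s → ⌊t / s⌋ = m := fun t m h1 h2 =>
      Int.floor_eq_iff.2 ⟨by rwa [le_div_iff₀ hs], by rwa [div_lt_iff₀ hs]⟩
    exact Prod.ext (this _ _ h1 h2) (this _ _ h3 h4)
  have hunion : volume (⋃ c ∈ hfin.toFinset, cell c) =
      hfin.toFinset.card * ENNReal.ofReal (s ^ 2) := by
    rw [measure_biUnion_finset]
    · simp [hvol]
    · intro c _ d _ hcd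
      refine Set.disjoint_left.2 fun p hp hp' => hcd ?_
      rw [← hmemcell c p hp, hmemcell d p hp']
    · exact fun c _ => measurableSet_Ico.prod measurableSet_Ico
  have hsub : (⋃ c ∈ hfin.toFinset, cell c) ⊆ Metric.cthickening s K := by
    refine Set.iUnion₂_subset fun c hc => ?_
    obtain ⟨p, hp, rfl⟩ := hfin.mem_toFinset.1 hc
    rintro z ⟨⟨h1, h2⟩, h3, h4⟩
    refine Metric.mem_cthickening_of_dist_le z p s K hp ?_
    have a1 := hfl p.1
    have a2 := hfl p.2
    simp only [hq] at h1 h2 h3 h4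
    rw [Prod.dist_eq, Real.dist_eq, Real.dist_eq]
    refine max_le (abs_le.2 ⟨?_, ?_⟩) (abs_le.2 ⟨?_, ?_⟩) <;> linarith
  have hle : (hfin.toFinset.card : ENNReal) * ENNReal.ofReal (s ^ 2) ≤
      volume K + ENNReal.ofReal η := by
    rw [← hunion]
    refine (measure_mono hsub).trans (hball ?_).le
    rw [Real.dist_eq, sub_zero, abs_of_pos hs]; linarith
  have := ENNReal.toReal_mono (by simp [hK.measure_lt_top.ne]) hle
  rwa [ENNReal.toReal_mul, ENNReal.toReal_add hK.measure_lt_top.ne ENNReal.ofReal_ne_top,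
    ENNReal.toReal_ofReal (by positivity), ENNReal.toReal_ofReal hη.le, ENNReal.toReal_natCast]
    at this

/-- A grid cell of side `2 * δ` in the coordinates `(x + y, x - y)` is an `ℓ¹`-ball of radius `δ`
in the plane, hence lies in the strip around any `1`-Lipschitz graph through its centre. Centres of
cells forming a chain in `ℤ × ℤ` lie on a horizontal Lipschitz graph, those of cells forming an
antichain on a vertical one. -/
theorem cover_by_cells (δ : ℝ) (hδ : 0 < δ) (k : ℕ) (P : Finset (ℤ × ℤ)) (hP : P.card ≤ k * k) :
    ∃ F G : Fin k → ℝ → ℝ, (∀ i, LipschitzWith 1 (F i)) ∧ (∀ i, LipschitzWith 1 (G i)) ∧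
      ∀ x y : ℝ, (⌊(x + y) / (2 * δ)⌋, ⌊(x - y) / (2 * δ)⌋) ∈ P →
        (∃ i, |y - F i x| ≤ δ) ∨ ∃ i, |x - G i y| ≤ δ := by
  obtain ⟨C, A, hC, hA, hcov⟩ := cover_chains_antichains k k P hP
  -- `(a c, b c)` is the centre of the cell `c`.
  set a : ℤ × ℤ → ℝ := fun c => (c.1 + c.2 + 1) * δ with ha
  set b : ℤ × ℤ → ℝ := fun c => (c.1 - c.2) * δ with hb
  have hle : ∀ c d : ℤ × ℤ, c ≤ d → |b c - b d| ≤ |a c - a d| := by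
    rintro ⟨m, n⟩ ⟨m', n'⟩ ⟨h1, h2⟩
    have h1' : (m : ℝ) ≤ m' := by exact_mod_cast h1
    have h2' : (n : ℝ) ≤ n' := by exact_mod_cast h2
    rw [abs_sub_comm (a _)]
    refine le_trans ?_ (le_abs_self _)
    simp only [ha, hb]
    rw [abs_le]; constructor <;> nlinarith
  have hcross : ∀ c d : ℤ × ℤ, c.1 ≤ d.1 → d.2 ≤ c.2 → |a c - a d| ≤ |b c - b d| := by
    rintro ⟨m, n⟩ ⟨m', n'⟩ h1 h2
    have h1' : (m : ℝ) ≤ m' := by exact_mod_cast h1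
    have h2' : (n' : ℝ) ≤ n := by exact_mod_cast h2
    rw [abs_sub_comm (b _)]
    refine le_trans ?_ (le_abs_self _)
    simp only [ha, hb]
    rw [abs_le]; constructor <;> nlinarith
  have hchain : ∀ i, ∀ c ∈ C i, ∀ d ∈ C i, |b c - b d| ≤ |a c - a d| := by
    intro i c hc d hd
    rcases (hC i).total hc hd with h | h
    · exact hle c d h
    · rw [abs_sub_comm (b c), abs_sub_comm (a c)]; exact hle d c h
  have hanti : ∀ i, ∀ c ∈ A i, ∀ d ∈ A i, |a c - a d| ≤ |b c - b d| := by
    intro i c hc d hd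
    by_cases hcd : c = d
    · subst hcd; simp
    have n1 := hA i hc hd hcd
    have n2 := hA i hd hc (Ne.symm hcd)
    rcases le_total c.1 d.1 with h1 | h1 <;> rcases le_total c.2 d.2 with h2 | h2
    · exact (n1 ⟨h1, h2⟩).elim
    · exact hcross c d h1 h2
    · rw [abs_sub_comm (b c), abs_sub_comm (a c)]; exact hcross d c h1 h2
    · exact (n2 ⟨h1, h2⟩).elim
  choose F hF hFv using fun i => exists_lipschitz_through (C i) a b (hchain i)
  choose G hG hGv using fun i => exists_lipschitz_through (A i) b a (hanti i)
  refine ⟨F, G, hF, hG, fun x y hxy => ?_⟩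
  have hlip : ∀ f : ℝ → ℝ, LipschitzWith 1 f → ∀ s t, |f s - f t| ≤ |s - t| := by
    intro f hf s t
    simpa [Real.dist_eq] using hf.dist_le_mul s t
  have hfl : ∀ t : ℝ, ⌊t / (2 * δ)⌋ * (2 * δ) ≤ t ∧ t < (⌊t / (2 * δ)⌋ + 1) * (2 * δ) := fun t =>
    ⟨by rw [← le_div_iff₀ (by positivity)]; exact Int.floor_le _,
      by rw [← div_lt_iff₀ (by positivity)]; exact Int.lt_floor_add_one _⟩
  obtain ⟨u1, u2⟩ := hfl (x + y)
  obtain ⟨v1, v2⟩ := hfl (x - y)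
  set c : ℤ × ℤ := (⌊(x + y) / (2 * δ)⌋, ⌊(x - y) / (2 * δ)⌋) with hc
  have hdist : |x - a c| + |y - b c| ≤ δ := by
    simp only [ha, hb, hc]
    rcases abs_cases (x - (⌊(x + y) / (2 * δ)⌋ + ⌊(x - y) / (2 * δ)⌋ + 1) * δ) with h | h <;>
    rcases abs_cases (y - (⌊(x + y) / (2 * δ)⌋ - ⌊(x - y) / (2 * δ)⌋) * δ) with h' | h' <;>
    linarith
  rcases hcov c hxy with ⟨i, hi⟩ | ⟨i, hi⟩
  · left
    refine ⟨i, ?_⟩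
    have h1 := hlip _ (hF i) (a c) x
    rw [hFv i c hi, abs_sub_comm (a c)] at h1
    linarith [abs_sub_le y (b c) (F i x)]
  · right
    refine ⟨i, ?_⟩
    have h1 := hlip _ (hG i) (b c) y
    rw [hGv i c hi, abs_sub_comm (b c)] at h1
    linarith [abs_sub_le x (a c) (G i y)]

/-- **Covering of a compact planar set by pairwise disjoint Lipschitz strips.**
Strengthening of the Alberti–Csörnyei–Preiss covering: for a compact `K ⊆ [0,1]²` and
`ε > 0`, for all sufficiently small `δ > 0` there are `1`-Lipschitz functions
`f_1, …, f_N, g_1, …, g_M : [0,1] → [0,1]` with `δN ≤ √|K| + ε`, `δM ≤ √|K| + ε` whose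
strips of half-width `δ` cover `K`, such that moreover `f_{i+1} ≤ f_i - 2δ` and
`g_{j+1} ≤ g_j - 2δ` (so the open horizontal strips are pairwise disjoint, and likewise the
vertical ones), and `δ ≤ f_i ≤ 1 - δ`, `δ ≤ g_j ≤ 1 - δ` (so all strips lie in `[0,1]²`). -/
theorem compact_covered_by_disjoint_lipschitz_strips
    (K : Set (ℝ × ℝ)) (hK : IsCompact K)
    (hK1 : K ⊆ Set.Icc (0:ℝ) 1 ×ˢ Set.Icc (0:ℝ) 1)
    (ε : ℝ) (hε : 0 < ε) :
    ∃ δ₀ > (0 : ℝ), ∀ δ : ℝ, 0 < δ → δ ≤ δ₀ →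
      ∃ (N M : ℕ) (f : Fin N → ℝ → ℝ) (g : Fin M → ℝ → ℝ),
        δ * N ≤ Real.sqrt (volume K).toReal + ε ∧
        δ * M ≤ Real.sqrt (volume K).toReal + ε ∧
        (∀ i, LipschitzOnWith 1 (f i) (Set.Icc 0 1)) ∧
        (∀ j, LipschitzOnWith 1 (g j) (Set.Icc 0 1)) ∧
        (∀ p ∈ K, (∃ i, p.1 ∈ Set.Icc (0:ℝ) 1 ∧ |p.2 - f i p.1| ≤ δ) ∨
          ∃ j, p.2 ∈ Set.Icc (0:ℝ) 1 ∧ |p.1 - g j p.2| ≤ δ) ∧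
        (∀ i : Fin N, ∀ hi : (i : ℕ) + 1 < N, ∀ x ∈ Set.Icc (0:ℝ) 1,
          f ⟨(i : ℕ) + 1, hi⟩ x ≤ f i x - 2 * δ) ∧
        (∀ j : Fin M, ∀ hj : (j : ℕ) + 1 < M, ∀ y ∈ Set.Icc (0:ℝ) 1,
          g ⟨(j : ℕ) + 1, hj⟩ y ≤ g j y - 2 * δ) ∧
        (∀ i, ∀ x ∈ Set.Icc (0:ℝ) 1, f i x ∈ Set.Icc δ (1 - δ)) ∧
        (∀ j, ∀ y ∈ Set.Icc (0:ℝ) 1, g j y ∈ Set.Icc δ (1 - δ)) := by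
  by_cases hbig : 1 / 2 ≤ Real.sqrt (volume K).toReal + ε
  · refine ⟨1 / 8, by norm_num, fun δ hδ hδ8 => ?_⟩
    obtain ⟨N, f, g, hN, hf, hg, hcov, hfs, hgs, hfb, hgb⟩ := pinwheel δ hδ hδ8
    refine ⟨N, N, f, g, hN.trans hbig, hN.trans hbig, fun i => (hf i).lipschitzOnWith,
      fun i => (hg i).lipschitzOnWith, fun p hp => ?_, fun i hi x _ => hfs i hi x,
      fun i hi x _ => hgs i hi x, fun i x _ => hfb i x, fun i x _ => hgb i x⟩
    obtain ⟨h1, h2⟩ := hK1 hp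
    rcases hcov p.1 h1 p.2 h2 with ⟨i, hi⟩ | ⟨i, hi⟩
    · exact Or.inl ⟨i, h1, hi⟩
    · exact Or.inr ⟨i, h2, hi⟩
  push Not at hbig
  obtain ⟨ρ, hρ, hcount⟩ := count_cells _
    (hK.image (f := fun p : ℝ × ℝ => (p.1 + p.2, p.1 - p.2)) (by fun_prop)) (ε ^ 2)
    (by positivity)
  refine ⟨min (ρ / 2) (ε / 2), by positivity, fun δ hδ hδ0 => ?_⟩
  have hδ1 := hδ0.trans (min_le_left _ _)
  have hδ2 := hδ0.trans (min_le_right _ _)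
  obtain ⟨P, hPK, hPcard⟩ := hcount (2 * δ) (by positivity) (by linarith)
  rw [volume_rotated, ENNReal.toReal_mul, ENNReal.toReal_ofNat] at hPcard
  set V := (volume K).toReal with hV
  have hV0 : 0 ≤ V := ENNReal.toReal_nonneg
  -- The grid has mesh `2 * δ` in rotated coordinates, hence `4 * δ ^ 2 * P.card ≤ 2 * V + ε ^ 2`, and
  -- `√P.card` chains and antichains are at most `(√V + ε / 2) / δ` many.
  set k := ⌈Real.sqrt P.card⌉₊ with hk
  have hk1 : Real.sqrt P.card ≤ k := Nat.le_ceil _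
  have hk2 : (k : ℝ) < Real.sqrt P.card + 1 := Nat.ceil_lt_add_one (Real.sqrt_nonneg _)
  have hPk : P.card ≤ k * k := by
    have := (Real.sqrt_le_left (by positivity)).1 hk1
    rw [sq] at this
    exact_mod_cast this
  have hδk : δ * k ≤ Real.sqrt V + ε := by
    have h1 : δ * Real.sqrt P.card ≤ Real.sqrt V + ε / 2 := by
      refine abs_le_of_sq_le_sq' ?_ (by positivity) |>.2
      have e1 := Real.sq_sqrt hV0
      have e2 := Real.sq_sqrt (Nat.cast_nonneg (α := ℝ) P.card)
      rw [mul_pow, e2]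
      nlinarith [mul_nonneg (Real.sqrt_nonneg V) hε.le]
    nlinarith
  have h2δk : 2 * δ * k ≤ 1 := by linarith
  obtain ⟨F, G, hF, hG, hcov⟩ := cover_by_cells δ hδ k P hPk
  obtain ⟨f, hf, hfs, hfb, hfc⟩ := exists_separated δ hδ k h2δk F hF
  obtain ⟨g, hg, hgs, hgb, hgc⟩ := exists_separated δ hδ k h2δk G hG
  refine ⟨k, k, f, g, hδk, hδk, fun i => (hf i).lipschitzOnWith,
    fun i => (hg i).lipschitzOnWith, fun p hp => ?_, fun i hi x _ => hfs i hi x,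
    fun i hi x _ => hgs i hi x, fun i x _ => hfb i x, fun i x _ => hgb i x⟩
  obtain ⟨h1, h2⟩ := hK1 hp
  rcases hcov p.1 p.2 (hPK _ ⟨p, hp, rfl⟩) with h | h
  · obtain ⟨i, hi⟩ := hfc _ _ h2 h
    exact Or.inl ⟨i, h1, hi⟩
  · obtain ⟨i, hi⟩ := hgc _ _ h1 h
    exact Or.inr ⟨i, h2, hi⟩
end
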